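/- arXiv:1911.03707 — 2 statements merged into one kernel-verified Lean document; each statement's English description precedes it below -/
import Mathlib

section
/- For every even natural number n with 34 ≤ n ≤ 75000: if n ≡ 0 (mod 4) then a(n, n(n+1)/4) = M_n, and if n ≡ 2 (mod 4) then a(n, ⌊n(n+1)/4⌋) = -M_n. That is, in the 0 mod 4 case the maximum absolute coefficient is the absolute maximum of the coefficients, and in the 2 mod 4 case it is the negative of the absolute minimum. -/
open Polynomial

/-- `a n i` is the coefficient of `q^i` in `(q;q)_n = ∏_{k=1}^n (1 - q^k)` over `ℤ`. -/
noncomputable def a (n i : ℕ) : ℤ :=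
  (∏ k ∈ Finset.Icc 1 n, (1 - (X : Polynomial ℤ) ^ k)).coeff i

/-- `M n` is the maximum of `|a n i|` over `0 ≤ i ≤ n(n+1)/2`. -/
noncomputable def M (n : ℕ) : ℕ :=
  (Finset.range (n * (n + 1) / 2 + 1)).sup fun i => (a n i).natAbs

/-- `L n` is the least index `i` with `|a n i| = M n`. -/
noncomputable def L (n : ℕ) : ℕ :=
  sInf {i : ℕ | (a n i).natAbs = M n}

/-!
With its phase removed, `(q;q)_n` at `q = exp (2πix)` is the real product
`S(x) = ∏_{k=1}^n 2 sin (πkx)`. For `n = 2h` this makes `(-1)^h a(n, j)` twice the integral of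
`S(x) cos (πmx)` over `[0, 1/2]`, where `m = |n(n+1)/2 - 2j|`, and the central coefficient is the
one with the least frequency, `e ∈ {0, 1}`. It dominates as soon as the integrals of
`S(x) (cos (πex) ± cos (πmx))` are nonnegative.

On the first arc `[0, 1/n]` the product `S` is nonnegative and has a single peak, of height at least
`exp (0.189 n)`. For `m < n` the factor `cos (πex) ± cos (πmx)` is nonnegative there and not small
on the part `3/4 ≤ (n + 1/2)x ≤ 5/6` near the peak; for `m ≥ n` the peak is wide enough that the
oscillation of `cos (πmx)` is felt. Either way this arc contributes at least `n exp (0.117 n + 24)`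
when `n ≥ 800`. On the rest of `[0, 1/2]`, approximate `x` by a fraction `p / q` with `q ≤ 9`
(Dirichlet). Along `k, k + q, k + 2q, …` the points `kx` move in small steps modulo `1`, so the
trapezoid rule for the concave function `log |2 sin (πt)|` bounds the sum of its values by
increments of its primitive, the Lobachevsky function. This gives `|S(x)| ≤ n exp (0.117 n + 24)`.

For `34 ≤ n < 800` all the coefficients are packed into a single integer, the value of `(q;q)_n` at
a power of two, and are compared with the central one by bit masks.
-/

namespace QPochhammer

open Real MeasureTheory Set

section ConcaveQuadrature

variable {f : ℝ → ℝ} {s t b h : ℝ}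

lemma trapezoid_le_integral_of_concaveOn (hst : s ≤ t) (hf : ConcaveOn ℝ (Icc s t) f)
    (hfi : IntervalIntegrable f volume s t) :
    (t - s) * ((f s + f t) / 2) ≤ ∫ u in s..t, f u := by
  rcases hst.eq_or_lt with rfl | hst
  · simp
  have hlen : 0 < t - s := sub_pos.2 hst
  have chord_le : ∀ u ∈ Icc s t, f s + (u - s) * ((f t - f s) / (t - s)) ≤ f u := by
    intro u hu
    have hu₀ : 0 ≤ (u - s) / (t - s) := div_nonneg (by linarith [hu.1]) hlen.le
    have hu₁ : 0 ≤ 1 - (u - s) / (t - s) := by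
      rw [sub_nonneg, div_le_one hlen]; linarith [hu.2]
    have := hf.2 (left_mem_Icc.2 hst.le) (right_mem_Icc.2 hst.le) hu₁ hu₀ (by ring)
    simp only [smul_eq_mul] at this
    calc f s + (u - s) * ((f t - f s) / (t - s))
        = (1 - (u - s) / (t - s)) * f s + (u - s) / (t - s) * f t := by ring
      _ ≤ f ((1 - (u - s) / (t - s)) * s + (u - s) / (t - s) * t) := this
      _ = f u := by congr 1; field_simp; ring
  have := intervalIntegral.integral_mono_on hst.le
    (Continuous.intervalIntegrable (by fun_prop) _ _) hfi chord_le
  refine le_trans (le_of_eq ?_) this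
  rw [intervalIntegral.integral_add (by simp) (Continuous.intervalIntegrable (by fun_prop) _ _),
    intervalIntegral.integral_mul_const, intervalIntegral.integral_sub (by simp) (by simp)]
  simp only [intervalIntegral.integral_const, smul_eq_mul, integral_id]
  field_simp
  ring

lemma integral_le_midpoint_of_concaveOn (hst : s ≤ t) (hf : ConcaveOn ℝ (Icc s t) f)
    (hfi : IntervalIntegrable f volume s t) :
    ∫ u in s..t, f u ≤ (t - s) * f ((s + t) / 2) := by
  have reflect : ∫ u in s..t, f (s + t - u) = ∫ u in s..t, f u := by
    rw [intervalIntegral.integral_comp_sub_left]; simp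
  have hfi' : IntervalIntegrable (fun u => f (s + t - u)) volume s t := by
    simpa using (hfi.comp_sub_left (s + t)).symm
  have average_le : ∀ u ∈ Icc s t, f u + f (s + t - u) ≤ 2 * f ((s + t) / 2) := by
    intro u hu
    have := hf.2 hu (y := s + t - u) ⟨by linarith [hu.2], by linarith [hu.1]⟩
      (by norm_num : (0 : ℝ) ≤ 1 / 2) (by norm_num : (0 : ℝ) ≤ 1 / 2) (by norm_num)
    simp only [smul_eq_mul] at this
    rw [show 1 / 2 * u + 1 / 2 * (s + t - u) = (s + t) / 2 by ring] at this
    linarith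
  have := intervalIntegral.integral_mono_on hst (hfi.add hfi') (by simp) average_le
  rw [intervalIntegral.integral_add hfi hfi', reflect, intervalIntegral.integral_const,
    smul_eq_mul] at this
  linarith

lemma Icc_grid_subset (hh : 0 ≤ h) {n k : ℕ} (hk : k < n) :
    Icc (b + k * h) (b + (k + 1 : ℕ) * h) ⊆ Icc b (b + n * h) := by
  have hkn : ((k + 1 : ℕ) : ℝ) ≤ n := by exact_mod_cast hk
  exact Icc_subset_Icc (by simpa using by positivity) (by gcongr)

lemma intervalIntegrable_grid (hh : 0 ≤ h) {n k : ℕ} (hk : k < n)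
    (hfi : IntervalIntegrable f volume b (b + n * h)) :
    IntervalIntegrable f volume (b + k * h) (b + (k + 1 : ℕ) * h) := by
  apply hfi.mono_set
  rw [uIcc_of_le (by push_cast; linarith), uIcc_of_le (by simpa using by positivity)]
  exact Icc_grid_subset hh hk

lemma sum_integral_grid (hh : 0 ≤ h) {n : ℕ}
    (hfi : IntervalIntegrable f volume b (b + n * h)) :
    ∑ k ∈ Finset.range n, ∫ u in (b + k * h)..(b + (k + 1 : ℕ) * h), f u =
      ∫ u in b..(b + n * h), f u := by
  simpa using intervalIntegral.sum_integral_adjacent_intervals (a := fun k : ℕ => b + k * h)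
    fun k hk => intervalIntegrable_grid hh hk hfi

lemma trapezoid_sum_le_integral_of_concaveOn (hh : 0 ≤ h) {n : ℕ}
    (hf : ConcaveOn ℝ (Icc b (b + n * h)) f) (hfi : IntervalIntegrable f volume b (b + n * h)) :
    h * ∑ k ∈ Finset.range n, (f (b + k * h) + f (b + (k + 1 : ℕ) * h)) / 2 ≤
      ∫ u in b..(b + n * h), f u := by
  rw [← sum_integral_grid hh hfi, Finset.mul_sum]
  refine Finset.sum_le_sum fun k hk => ?_
  have hk := Finset.mem_range.1 hk
  have := trapezoid_le_integral_of_concaveOn (by push_cast; linarith)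
    (hf.subset (Icc_grid_subset hh hk) (convex_Icc _ _)) (intervalIntegrable_grid hh hk hfi)
  refine le_trans (le_of_eq ?_) this
  push_cast
  ring

lemma integral_le_midpoint_sum_of_concaveOn (hh : 0 ≤ h) {n : ℕ}
    (hf : ConcaveOn ℝ (Icc b (b + n * h)) f) (hfi : IntervalIntegrable f volume b (b + n * h)) :
    ∫ u in b..(b + n * h), f u ≤ h * ∑ k ∈ Finset.range n, f (b + (k + 1 / 2) * h) := by
  rw [← sum_integral_grid hh hfi, Finset.mul_sum]
  refine Finset.sum_le_sum fun k hk => ?_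
  have hk := Finset.mem_range.1 hk
  have := integral_le_midpoint_of_concaveOn (by push_cast; linarith)
    (hf.subset (Icc_grid_subset hh hk) (convex_Icc _ _)) (intervalIntegrable_grid hh hk hfi)
  refine this.trans (le_of_eq ?_)
  push_cast
  ring_nf

lemma sum_range_succ_eq_trapezoid (g : ℕ → ℝ) (m : ℕ) :
    ∑ k ∈ Finset.range (m + 1), g k =
      ∑ k ∈ Finset.range m, (g k + g (k + 1)) / 2 + (g 0 + g m) / 2 := by
  have h₁ := Finset.sum_range_succ g m
  have h₂ := Finset.sum_range_succ' g m
  rw [← Finset.sum_div, Finset.sum_add_distrib]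
  linarith

end ConcaveQuadrature

lemma sin_pi_mul_pos {t : ℝ} (h₀ : 0 < t) (h₁ : t < 1) : 0 < sin (π * t) :=
  sin_pos_of_pos_of_lt_pi (by positivity) (by nlinarith [pi_pos])

lemma sin_pi_mul_eq_zero_iff {t : ℝ} : sin (π * t) = 0 ↔ ∃ k : ℤ, t = k := by
  simp_rw [sin_eq_zero_iff, mul_comm π t, mul_left_inj' pi_ne_zero, eq_comm]

lemma two_mul_le_sin_pi_mul {t : ℝ} (h₀ : 0 ≤ t) (h₁ : t ≤ 1 / 2) : 2 * t ≤ sin (π * t) := by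
  have := mul_le_sin (x := π * t) (by positivity) (by nlinarith [pi_pos])
  rwa [show 2 / π * (π * t) = 2 * t by field_simp] at this

/-- The function `t ↦ log |2 sin (π t)|`; no absolute value is needed because `Real.log` is even.
At the integers it takes the junk value `0`. -/
noncomputable def logSin (t : ℝ) : ℝ := log (2 * sin (π * t))

lemma logSin_periodic : Function.Periodic logSin 1 := by
  intro t
  rw [logSin, logSin, mul_add, mul_one, sin_add_pi, mul_neg, log_neg_eq_log]

lemma logSin_add_intCast (t : ℝ) (k : ℤ) : logSin (t + k) = logSin t := by
  simpa using logSin_periodic.int_mul k t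

lemma logSin_neg (t : ℝ) : logSin (-t) = logSin t := by
  rw [logSin, logSin, mul_neg, sin_neg, mul_neg, log_neg_eq_log]

lemma logSin_one_sub (t : ℝ) : logSin (1 - t) = logSin t := by
  rw [show 1 - t = -t + 1 by ring, logSin_periodic, logSin_neg]

@[simp]
lemma logSin_zero : logSin 0 = 0 := by simp [logSin]

lemma logSin_le_log_two (t : ℝ) : logSin t ≤ log 2 := by
  by_cases h : sin (π * t) = 0
  · simpa [logSin, h] using log_nonneg one_le_two
  · rw [logSin, ← log_abs]
    refine log_le_log (by positivity) ?_
    rw [abs_mul, abs_two]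
    linarith [abs_sin_le_one (π * t)]

lemma intervalIntegrable_logSin_comp_affine (k c s t : ℝ) :
    IntervalIntegrable (fun u => logSin (k + c * u)) volume s t := by
  have h : AnalyticOnNhd ℝ (fun u : ℝ => 2 * sin (π * (k + c * u))) univ := by
    intro x _
    fun_prop
  exact (h.meromorphicOn.mono_set (subset_univ (uIcc s t))).intervalIntegrable_log

lemma intervalIntegrable_logSin (s t : ℝ) : IntervalIntegrable logSin volume s t := by
  simpa using intervalIntegrable_logSin_comp_affine 0 1 s t

lemma concaveOn_logSin : ConcaveOn ℝ (Ioo 0 1) logSin := by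
  refine ⟨convex_Ioo _ _, fun x hx y hy α β hα hβ hαβ => ?_⟩
  have mem_Icc : ∀ t ∈ Ioo (0 : ℝ) 1, π * t ∈ Icc 0 π := fun t ht =>
    ⟨by have := ht.1; positivity, by nlinarith [pi_pos, ht.2]⟩
  have two_sin_pos : ∀ t ∈ Ioo (0 : ℝ) 1, 2 * sin (π * t) ∈ Ioi 0 := fun t ht =>
    mul_pos two_pos (sin_pi_mul_pos ht.1 ht.2)
  have sin_concave := strictConcaveOn_sin_Icc.concaveOn.2 (mem_Icc x hx) (mem_Icc y hy) hα hβ hαβ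
  have log_concave := strictConcaveOn_log_Ioi.concaveOn.2 (two_sin_pos x hx) (two_sin_pos y hy)
    hα hβ hαβ
  refine log_concave.trans (log_le_log ?_ ?_)
  · exact convex_Ioi (0 : ℝ) (two_sin_pos x hx) (two_sin_pos y hy) hα hβ hαβ
  · simp only [smul_eq_mul] at sin_concave ⊢
    rw [show π * (α * x + β * y) = α * (π * x) + β * (π * y) by ring]
    linarith

lemma concaveOn_logSin_Icc {s t : ℝ} (hs : 0 < s) (ht : t < 1) :
    ConcaveOn ℝ (Icc s t) logSin :=
  concaveOn_logSin.subset (Icc_subset_Ioo hs ht) (convex_Icc s t)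

lemma logSin_le_logSin {b c : ℝ} (hc : 0 < c) (hcb : c ≤ b) (hbc : b + c ≤ 1) :
    logSin c ≤ logSin b := by
  have hsin : sin (π * c) ≤ sin (π * b) := by
    rcases le_total b (1 / 2) with hb | hb
    · apply sin_le_sin_of_le_of_le_pi_div_two <;> nlinarith [pi_pos]
    · rw [← sin_pi_sub (π * b)]
      apply sin_le_sin_of_le_of_le_pi_div_two <;> nlinarith [pi_pos]
  exact log_le_log (mul_pos two_pos (sin_pi_mul_pos hc (by linarith))) (by linarith)

lemma log_four_mul_le_logSin {t : ℝ} (h₀ : 0 < t) (h₁ : t ≤ 1 / 2) : log (4 * t) ≤ logSin t :=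
  log_le_log (by positivity) (by linarith [two_mul_le_sin_pi_mul h₀.le h₁])

lemma logSin_add_log_sub_log_le {u c : ℝ} (hu : 0 < u) (huc : u ≤ c) (hc : c < 1) :
    logSin c + (log u - log c) ≤ logSin u := by
  have hc₀ : 0 < c := hu.trans_le huc
  have hsin := sin_pi_mul_pos hc₀ hc
  have hchord : u / c * sin (π * c) ≤ sin (π * u) := by
    have hle : 0 ≤ 1 - u / c := by rw [sub_nonneg, div_le_one hc₀]; exact huc
    have := strictConcaveOn_sin_Icc.concaveOn.2 (left_mem_Icc.2 pi_pos.le)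
      (y := π * c) ⟨by positivity, by nlinarith [pi_pos]⟩ hle (div_nonneg hu.le hc₀.le)
      (sub_add_cancel _ _)
    simp only [smul_eq_mul, sin_zero, mul_zero, zero_add] at this
    rwa [show u / c * (π * c) = π * u by field_simp] at this
  have := log_le_log (by positivity) hchord
  rw [log_mul (by positivity) hsin.ne', log_div hu.ne' hc₀.ne'] at this
  rw [logSin, logSin, log_mul two_ne_zero hsin.ne',
    log_mul two_ne_zero (sin_pi_mul_pos hu (huc.trans_lt hc)).ne']
  linarith

lemma logSin_one_sixth : logSin (1 / 6) = 0 := by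
  rw [logSin, show π * (1 / 6) = π / 6 by ring, sin_pi_div_six]
  norm_num

lemma logSin_nonneg {t : ℝ} (h₁ : 1 / 6 ≤ t) (h₂ : t ≤ 5 / 6) : 0 ≤ logSin t :=
  logSin_one_sixth ▸ logSin_le_logSin (by norm_num) h₁ (by linarith)

lemma logSin_nonpos {t : ℝ} (h₁ : 0 ≤ t) (h₂ : t ≤ 1 / 6) : logSin t ≤ 0 := by
  rcases h₁.eq_or_lt with rfl | h₁
  · simp
  · exact logSin_one_sixth ▸ logSin_le_logSin h₁ h₂ (by linarith)

lemma logSin_nonpos_of_five_sixths_le {t : ℝ} (h₁ : 5 / 6 ≤ t) (h₂ : t ≤ 1) : logSin t ≤ 0 :=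
  logSin_one_sub t ▸ logSin_nonpos (by linarith) (by linarith)

lemma logSin_half : logSin (1 / 2) = log 2 := by
  rw [logSin, show π * (1 / 2) = π / 2 by ring, sin_pi_div_two, mul_one]

lemma logSin_three_quarters : logSin (3 / 4) = log 2 / 2 := by
  rw [← logSin_one_sub, logSin, show π * (1 - 3 / 4) = π / 4 by ring, sin_pi_div_four,
    show 2 * (√2 / 2) = √2 by ring, log_sqrt zero_le_two]

lemma logSin_two_thirds : logSin (2 / 3) = log 3 / 2 := by
  rw [← logSin_one_sub, logSin, show π * (1 - 2 / 3) = π / 3 by ring, sin_pi_div_three,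
    show 2 * (√3 / 2) = √3 by ring, log_sqrt (by norm_num)]

lemma logSin_seven_twelfths : logSin (7 / 12) = log (2 + √3) / 2 := by
  have hsq : (2 * sin (π * (7 / 12))) ^ 2 = 2 + √3 := by
    rw [mul_pow, sin_sq_eq_half_sub, show 2 * (π * (7 / 12)) = π / 6 + π by ring, cos_add_pi,
      cos_pi_div_six]
    ring
  rw [← hsq, log_pow, logSin]
  push_cast
  ring

lemma log_two_add_sqrt_three_mem_Ioo : log (2 + √3) ∈ Ioo 1.315 1.318 := by
  have hlow : (1.732 : ℝ) ≤ √3 := le_sqrt_of_sq_le (by norm_num)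
  have hupp : √3 ≤ 1.7321 := sqrt_le_iff.2 (by norm_num)
  have log_two_gt := log_two_gt_d9
  have log_two_lt := log_two_lt_d9
  constructor
  · have hpow : (2 : ℝ) ^ 74 ≤ (2 + √3) ^ 39 :=
      calc (2 : ℝ) ^ 74 ≤ 3.732 ^ 39 := by norm_num
        _ ≤ (2 + √3) ^ 39 := by gcongr; linarith
    have := log_le_log (by norm_num) hpow
    rw [log_pow, log_pow] at this
    push_cast at this
    linarith
  · have hpow : (2 + √3) ^ 10 ≤ 2 ^ 19 :=
      calc (2 + √3) ^ 10 ≤ 3.7321 ^ 10 := by gcongr; linarith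
        _ ≤ 2 ^ 19 := by norm_num
    have := log_le_log (by positivity) hpow
    rw [log_pow, log_pow] at this
    push_cast at this
    linarith

/-- The primitive `∫₀ᵗ log |2 sin (π u)| du` of `logSin`. It equals `-Λ(π t) / π`, where `Λ` is
the Lobachevsky function. -/
noncomputable def logSinIntegral (t : ℝ) : ℝ := ∫ u in (0 : ℝ)..t, logSin u

lemma integral_logSin (s t : ℝ) : ∫ u in s..t, logSin u = logSinIntegral t - logSinIntegral s :=
  (intervalIntegral.integral_interval_sub_left (intervalIntegrable_logSin _ _)
    (intervalIntegrable_logSin _ _)).symm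

@[simp]
lemma logSinIntegral_zero : logSinIntegral 0 = 0 := by simp [logSinIntegral]

lemma logSinIntegral_half : logSinIntegral (1 / 2) = 0 := by
  have split_log : ∫ u in (0 : ℝ)..(1 / 2), logSin u =
      ∫ u in (0 : ℝ)..(1 / 2), (log 2 + log (sin (π * u))) := by
    refine intervalIntegral.integral_congr_ae (.of_forall fun u hu => ?_)
    rw [uIoc_of_le (by norm_num)] at hu
    exact log_mul two_ne_zero (sin_pi_mul_pos hu.1 (by linarith [hu.2])).ne'
  have hint : IntervalIntegrable (fun u => log (sin (π * u))) volume 0 (1 / 2) := by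
    have h : AnalyticOnNhd ℝ (fun u : ℝ => sin (π * u)) univ := by
      intro x _
      fun_prop
    exact (h.meromorphicOn.mono_set (subset_univ _)).intervalIntegrable_log
  rw [logSinIntegral, split_log, intervalIntegral.integral_add (by simp) hint,
    intervalIntegral.integral_comp_mul_left (fun x => log (sin x)) pi_ne_zero, mul_zero,
    show π * (1 / 2) = π / 2 by ring, integral_log_sin_zero_pi_div_two]
  simp only [intervalIntegral.integral_const, smul_eq_mul]
  field_simp
  ring

lemma logSinIntegral_one_sub_eq_sub (t : ℝ) :
    logSinIntegral (1 - t) = logSinIntegral 1 - logSinIntegral t := by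
  have := intervalIntegral.integral_comp_sub_left (a := 0) (b := t) logSin 1
  simp only [logSin_one_sub, sub_zero, integral_logSin, logSinIntegral_zero] at this
  linarith

@[simp]
lemma logSinIntegral_one : logSinIntegral 1 = 0 := by
  have := logSinIntegral_one_sub_eq_sub (1 / 2)
  rw [show (1 : ℝ) - 1 / 2 = 1 / 2 by norm_num, logSinIntegral_half] at this
  linarith

lemma logSinIntegral_one_sub (t : ℝ) : logSinIntegral (1 - t) = -logSinIntegral t := by
  simp [logSinIntegral_one_sub_eq_sub]

lemma logSinIntegral_periodic : Function.Periodic logSinIntegral 1 := by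
  intro t
  have := logSin_periodic.intervalIntegral_add_eq t 0
  simp only [integral_logSin, zero_add, logSinIntegral_one, logSinIntegral_zero] at this
  linarith

lemma logSinIntegral_add_intCast (t : ℝ) (k : ℤ) : logSinIntegral (t + k) = logSinIntegral t := by
  simpa using logSinIntegral_periodic.int_mul k t

lemma logSinIntegral_sub_le {s t : ℝ} (hst : s ≤ t) :
    logSinIntegral t - logSinIntegral s ≤ (t - s) * log 2 := by
  rw [← integral_logSin]
  simpa using intervalIntegral.integral_mono_on hst (intervalIntegrable_logSin _ _) (by simp)
    fun u _ => logSin_le_log_two u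

lemma logSinIntegral_le_of_nonneg {s t : ℝ} (hst : s ≤ t) (h : ∀ u ∈ Icc s t, 0 ≤ logSin u) :
    logSinIntegral s ≤ logSinIntegral t := by
  have := intervalIntegral.integral_nonneg hst h (μ := volume)
  rw [integral_logSin] at this
  linarith

lemma logSinIntegral_le_of_nonpos {s t : ℝ} (hst : s ≤ t) (h : ∀ u ∈ Icc s t, logSin u ≤ 0) :
    logSinIntegral t ≤ logSinIntegral s := by
  have := intervalIntegral.integral_nonneg (f := fun u => -logSin u) (μ := volume) hst
    fun u hu => neg_nonneg.2 (h u hu)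
  rw [intervalIntegral.integral_neg, integral_logSin] at this
  linarith

lemma logSinIntegral_nonpos {t : ℝ} (h₀ : 0 ≤ t) (h₁ : t ≤ 1 / 2) : logSinIntegral t ≤ 0 := by
  rcases le_total t (1 / 6) with h | h
  · rw [← logSinIntegral_zero]
    exact logSinIntegral_le_of_nonpos h₀ fun u hu => logSin_nonpos hu.1 (hu.2.trans h)
  · rw [← logSinIntegral_half]
    exact logSinIntegral_le_of_nonneg h₁ fun u hu =>
      logSin_nonneg (h.trans hu.1) (by linarith [hu.2])

lemma logSinIntegral_nonneg {t : ℝ} (h₀ : 1 / 2 ≤ t) (h₁ : t ≤ 1) : 0 ≤ logSinIntegral t := by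
  have := logSinIntegral_nonpos (t := 1 - t) (by linarith) (by linarith)
  rw [logSinIntegral_one_sub] at this
  linarith

lemma mul_logSin_sub_self_le_logSinIntegral {c : ℝ} (hc₀ : 0 < c) (hc : c < 1) :
    c * logSin c - c ≤ logSinIntegral c := by
  have hlog : IntervalIntegrable log volume 0 c := intervalIntegral.intervalIntegrable_log'
  have := intervalIntegral.integral_mono_on_of_le_Ioo hc₀.le
    (IntervalIntegrable.add (by simp) (hlog.sub (by simp))) (intervalIntegrable_logSin 0 c)
    fun u hu => logSin_add_log_sub_log_le hu.1 hu.2.le hc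
  refine le_trans (le_of_eq ?_) this
  rw [intervalIntegral.integral_add (by simp) (hlog.sub (by simp)),
    intervalIntegral.integral_sub hlog (by simp), integral_log]
  simp only [intervalIntegral.integral_const, smul_eq_mul, log_zero]
  ring

lemma trapezoid_le_logSinIntegral_sub {s t : ℝ} (hs : 0 < s) (hst : s ≤ t) (ht : t < 1) :
    (t - s) * ((logSin s + logSin t) / 2) ≤ logSinIntegral t - logSinIntegral s :=
  integral_logSin s t ▸ trapezoid_le_integral_of_concaveOn hst (concaveOn_logSin_Icc hs ht)
    (intervalIntegrable_logSin s t)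

lemma logSinIntegral_sub_le_midpoint {s t : ℝ} (hs : 0 < s) (hst : s ≤ t) (ht : t < 1) :
    logSinIntegral t - logSinIntegral s ≤ (t - s) * logSin ((s + t) / 2) :=
  integral_logSin s t ▸ integral_le_midpoint_of_concaveOn hst (concaveOn_logSin_Icc hs ht)
    (intervalIntegrable_logSin s t)

lemma trapezoid_le_across_one {r h : ℝ} (hr : r < 1) (hh : h < 1) (hrh : 1 < r + h) :
    (logSin r + logSin (r + h)) / 2 ≤ (logSinIntegral (r + h) - logSinIntegral r) / h + 1 := by
  obtain ⟨b, rfl⟩ : ∃ b, r = 1 - b := ⟨1 - r, by ring⟩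
  obtain ⟨c, rfl⟩ : ∃ c, h = b + c := ⟨h - b, by ring⟩
  have hb : 0 < b := by linarith
  have hc : 0 < c := by linarith
  rw [show 1 - b + (b + c) = c + 1 by ring, logSin_periodic, logSinIntegral_periodic,
    logSin_one_sub, logSinIntegral_one_sub]
  have integral_b := mul_logSin_sub_self_le_logSinIntegral hb (by linarith)
  have integral_c := mul_logSin_sub_self_le_logSinIntegral hc (by linarith)
  have similarly_ordered : 0 ≤ (b - c) * (logSin b - logSin c) := by
    rcases le_total b c with hbc | hbc
    · nlinarith [logSin_le_logSin hb hbc (by linarith)]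
    · nlinarith [logSin_le_logSin hc hbc (by linarith)]
  rw [← sub_le_iff_le_add, le_div_iff₀ (by linarith)]
  nlinarith

lemma trapezoid_logSin_le {s h : ℝ} (hh : 0 < h) (hh₁ : h < 1) (hs : ∀ k : ℤ, s ≠ k)
    (hs' : ∀ k : ℤ, s + h ≠ k) :
    (logSin s + logSin (s + h)) / 2 ≤
      (logSinIntegral (s + h) - logSinIntegral s) / h + ((⌊s + h⌋ : ℝ) - ⌊s⌋) := by
  obtain ⟨r, z, rfl, hr₀, hr₁⟩ : ∃ (r : ℝ) (z : ℤ), s = r + z ∧ 0 ≤ r ∧ r < 1 :=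
    ⟨Int.fract s, ⌊s⌋, (Int.fract_add_floor s).symm, Int.fract_nonneg s, Int.fract_lt_one s⟩
  have hr : 0 < r := hr₀.lt_of_ne fun h₀ => hs z (by simp [← h₀])
  have hr_floor : ⌊r⌋ = 0 := Int.floor_eq_zero_iff.2 ⟨hr₀, hr₁⟩
  rw [add_right_comm, logSin_add_intCast, logSin_add_intCast, logSinIntegral_add_intCast,
    logSinIntegral_add_intCast, Int.floor_add_intCast, Int.floor_add_intCast, hr_floor]
  push_cast
  rcases lt_trichotomy (r + h) 1 with hlt | heq | hgt
  · have hrh_floor : ⌊r + h⌋ = 0 := Int.floor_eq_zero_iff.2 ⟨by linarith, hlt⟩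
    have := trapezoid_le_logSinIntegral_sub hr (by linarith) hlt
    rw [add_sub_cancel_left, mul_comm, ← le_div_iff₀ hh] at this
    rw [hrh_floor]
    push_cast
    linarith
  · exact absurd (by push_cast; linarith) (hs' (1 + z))
  · have hrh_floor : ⌊r + h⌋ = 1 := Int.floor_eq_iff.2 (by push_cast; constructor <;> linarith)
    have := trapezoid_le_across_one hr₁ hh₁ hgt
    rw [hrh_floor]
    push_cast
    linarith

lemma logSinIntegral_le_five_sixths {t : ℝ} (h₀ : 0 ≤ t) (h₁ : t ≤ 1) :
    logSinIntegral t ≤ logSinIntegral (5 / 6) := by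
  rcases le_total t (1 / 2) with h | h
  · exact (logSinIntegral_nonpos h₀ h).trans (logSinIntegral_nonneg (by norm_num) (by norm_num))
  rcases le_total t (5 / 6) with h' | h'
  · exact logSinIntegral_le_of_nonneg h' fun u hu => logSin_nonneg (by linarith [hu.1]) hu.2
  · exact logSinIntegral_le_of_nonpos h' fun u hu =>
      logSin_nonpos_of_five_sixths_le hu.1 (hu.2.trans h₁)

lemma logSinIntegral_le (t : ℝ) : logSinIntegral t ≤ 0.1676 := by
  have on_left := logSinIntegral_sub_le_midpoint (s := 1 / 2) (t := 2 / 3)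
    (by norm_num) (by norm_num) (by norm_num)
  have on_right := logSinIntegral_sub_le_midpoint (s := 2 / 3) (t := 5 / 6)
    (by norm_num) (by norm_num) (by norm_num)
  norm_num at on_left on_right
  rw [logSin_seven_twelfths] at on_left
  rw [logSin_three_quarters] at on_right
  calc logSinIntegral t = logSinIntegral (Int.fract t) := by
        rw [← logSinIntegral_add_intCast (Int.fract t) ⌊t⌋, Int.fract_add_floor]
    _ ≤ logSinIntegral (5 / 6) :=
        logSinIntegral_le_five_sixths (Int.fract_nonneg t) (Int.fract_lt_one t).le
    _ ≤ 0.1676 := by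
        linarith [logSinIntegral_half, log_two_lt_d9, log_two_add_sqrt_three_mem_Ioo.2]

lemma le_logSinIntegral {w : ℝ} (h₁ : 3 / 4 ≤ w) (h₂ : w ≤ 5 / 6) :
    0.189 * w ≤ logSinIntegral w := by
  have trapezoid₁ := trapezoid_le_logSinIntegral_sub (s := 1 / 2) (t := 7 / 12)
    (by norm_num) (by norm_num) (by norm_num)
  have trapezoid₂ := trapezoid_le_logSinIntegral_sub (s := 7 / 12) (t := 2 / 3)
    (by norm_num) (by norm_num) (by norm_num)
  have trapezoid₃ := trapezoid_le_logSinIntegral_sub (s := 2 / 3) (t := 3 / 4)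
    (by norm_num) (by norm_num) (by norm_num)
  have trapezoid₄ := trapezoid_le_logSinIntegral_sub (s := 3 / 4) (t := w)
    (by norm_num) h₁ (by linarith)
  rw [logSin_half, logSin_seven_twelfths, logSinIntegral_half] at trapezoid₁
  rw [logSin_seven_twelfths, logSin_two_thirds] at trapezoid₂
  rw [logSin_two_thirds, logSin_three_quarters] at trapezoid₃
  rw [logSin_three_quarters] at trapezoid₄
  nlinarith [logSin_nonneg (t := w) (by linarith) h₂, log_two_gt_d9, log_three_gt_d9,
    log_two_add_sqrt_three_mem_Ioo.1]

lemma logSinIntegral_le_mul_self {t : ℝ} (ht : 0 < t) : logSinIntegral t ≤ 0.226 * t := by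
  rcases le_total t (1 / 2) with h | h
  · linarith [logSinIntegral_nonpos ht.le h]
  · have near_half := logSinIntegral_sub_le h
    rw [logSinIntegral_half] at near_half
    rcases le_total t 0.7417 with h' | h'
    · nlinarith [mul_le_mul_of_nonneg_left log_two_lt_d9.le (sub_nonneg.2 h)]
    · linarith [logSinIntegral_le t]

lemma le_sum_logSin {x : ℝ} (hx : 0 < x) {n : ℕ} (h : (n + 1 / 2) * x < 1) :
    (logSinIntegral ((n + 1 / 2) * x) - logSinIntegral (x / 2)) / x ≤
      ∑ k ∈ Finset.range n, logSin ((k + 1) * x) := by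
  have hend : x / 2 + n * x = (n + 1 / 2) * x := by ring
  have := integral_le_midpoint_sum_of_concaveOn (b := x / 2) (n := n) hx.le
    (concaveOn_logSin_Icc (by linarith) (by linarith)) (intervalIntegrable_logSin _ _)
  rw [hend, integral_logSin] at this
  rw [div_le_iff₀' hx]
  refine this.trans (le_of_eq ?_)
  ring_nf

lemma sum_logSin_le {x : ℝ} (hx : 0 < x) {m : ℕ} (h : (m + 1) * x < 1) :
    ∑ k ∈ Finset.range (m + 1), logSin ((k + 1) * x) ≤
      (logSinIntegral ((m + 1) * x) - logSinIntegral x) / x +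
        (logSin x + logSin ((m + 1) * x)) / 2 := by
  have hend : x + m * x = (m + 1) * x := by ring
  have := trapezoid_sum_le_integral_of_concaveOn (b := x) (n := m) hx.le
    (concaveOn_logSin_Icc hx (by linarith)) (intervalIntegrable_logSin _ _)
  rw [hend, integral_logSin, ← le_div_iff₀' hx] at this
  rw [sum_range_succ_eq_trapezoid, Nat.cast_zero, zero_add, one_mul]
  gcongr
  refine le_trans (le_of_eq (Finset.sum_congr rfl fun k _ => ?_)) this
  ring_nf

section ShiftedSums

variable {G : Type*} [AddCommGroup G]

lemma sum_range_shift_sub (g : ℕ → G) (m q : ℕ) :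
    ∑ k ∈ Finset.range m, (g (q + k) - g k) = ∑ j ∈ Finset.range q, (g (m + j) - g j) := by
  have := (Finset.sum_range_add g m q).symm.trans (add_comm m q ▸ Finset.sum_range_add g q m)
  rw [Finset.sum_sub_distrib, Finset.sum_sub_distrib, sub_eq_sub_iff_add_eq_add, add_comm,
    ← this, add_comm]

lemma sum_range_shift_add (g : ℕ → G) (m q : ℕ) :
    ∑ k ∈ Finset.range m, (g k + g (q + k)) + ∑ j ∈ Finset.range q, (g j + g (m + j)) =
      2 • ∑ k ∈ Finset.range (m + q), g k := by
  have := add_comm m q ▸ Finset.sum_range_add g q m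
  simp only [Finset.sum_add_distrib, two_nsmul]
  nth_rw 1 [Finset.sum_range_add, this]
  abel

end ShiftedSums

section Residues

variable {q : ℕ}

lemma sum_range_eq_sum_zmod {G : Type*} [AddCommMonoid G] [NeZero q] (g : ℤ → G) :
    ∑ j ∈ Finset.range q, g j = ∑ z : ZMod q, g z.val := by
  obtain ⟨k, rfl⟩ := Nat.exists_eq_succ_of_ne_zero (NeZero.ne q)
  exact (Fin.sum_univ_eq_sum_range (fun j => g j) (k + 1)).symm

lemma sum_range_mul_of_periodic {G : Type*} [AddCommMonoid G] {g : ℤ → G}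
    (hg : Function.Periodic g (q : ℤ)) {p : ℤ} (hpq : IsCoprime p (q : ℤ)) (c : ℤ) :
    ∑ j ∈ Finset.range q, g ((c + j) * p) = ∑ j ∈ Finset.range q, g j := by
  rcases q.eq_zero_or_pos with rfl | hq
  · simp
  have : NeZero q := ⟨hq.ne'⟩
  have congr_mod : ∀ {i j : ℤ}, (i : ZMod q) = j → g i = g j := by
    intro i j hij
    obtain ⟨k, hk⟩ := ((ZMod.intCast_eq_intCast_iff i j q).1 hij).dvd
    rw [eq_add_of_sub_eq' hk, mul_comm (q : ℤ) k]
    exact (hg.int_mul k i).symm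
  obtain ⟨u, hu⟩ : IsUnit (p : ZMod q) := by
    obtain ⟨r, s, hrs⟩ := hpq
    refine .of_mul_eq_one_right (r : ZMod q) ?_
    simpa using congrArg (Int.cast : ℤ → ZMod q) hrs
  rw [sum_range_eq_sum_zmod (fun j => g ((c + j) * p)), sum_range_eq_sum_zmod g]
  refine Fintype.sum_equiv ((Equiv.addLeft (c : ZMod q)).trans (Units.mulRight u)) _ _ fun z => ?_
  exact congr_mod (by simp [hu])

lemma sum_range_residues {F : ℝ → ℝ} (hF : Function.Periodic F 1) (hq : 0 < q) {p : ℤ}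
    (hpq : IsCoprime p (q : ℤ)) (c : ℤ) (t : ℝ) :
    ∑ j ∈ Finset.range q, F ((c + j) * p / q + t) = ∑ r ∈ Finset.range q, F (r / q + t) := by
  have hper : Function.Periodic (fun r : ℤ => F (r / q + t)) (q : ℤ) := by
    intro r
    have hshift : ((r + q : ℤ) : ℝ) / q + t = r / q + t + 1 := by push_cast; field_simp; ring
    simp only [hshift, hF (r / q + t)]
  simpa using sum_range_mul_of_periodic hper hpq c

lemma prod_abs_two_sin_add (hq : 0 < q) (u : ℝ) :
    ∏ r ∈ Finset.range q, |2 * sin (π * (r / q + u))| = |2 * sin (π * (q * u))| := by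
  have norm_eq : ∀ t : ℝ, ‖1 - Complex.exp (Complex.I * (2 * π * t : ℝ))‖ = |2 * sin (π * t)| := by
    intro t
    rw [norm_sub_rev, Complex.norm_exp_I_mul_ofReal_sub_one, norm_eq_abs]
    ring_nf
  have hfactor := congrArg (fun f => ‖f.eval 1‖) <|
    X_pow_sub_C_eq_prod (Complex.isPrimitiveRoot_exp q hq.ne') hq
      (α := Complex.exp (Complex.I * (2 * π * u : ℝ))) rfl
  simp only [eval_sub, eval_pow, eval_X, one_pow, eval_C, eval_prod, norm_prod,
    ← Complex.exp_nat_mul, ← Complex.exp_add] at hfactor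
  rw [← norm_eq, show Complex.I * (2 * π * (q * u) : ℝ) = q * (Complex.I * (2 * π * u : ℝ)) by
    push_cast; ring, hfactor]
  refine Finset.prod_congr rfl fun r _ => ?_
  rw [← norm_eq]
  congr 3
  push_cast
  field_simp

lemma sum_logSin_add (hq : 0 < q) {u : ℝ} (hu : ∀ k : ℤ, q * u ≠ k) :
    ∑ r ∈ Finset.range q, logSin (r / q + u) = logSin (q * u) := by
  have hprod := prod_abs_two_sin_add hq u
  have hne : |2 * sin (π * (q * u))| ≠ 0 :=
    abs_ne_zero.2 <| mul_ne_zero two_ne_zero fun h =>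
      (sin_pi_mul_eq_zero_iff.1 h).elim fun k hk => hu k hk
  have hlog := congrArg log hprod
  rw [log_prod (Finset.prod_ne_zero_iff.1 (hprod ▸ hne))] at hlog
  simpa only [logSin, log_abs] using hlog

lemma sum_logSinIntegral_add_sub (hq : 0 < q) (s t : ℝ) :
    ∑ r ∈ Finset.range q, (logSinIntegral (r / q + t) - logSinIntegral (r / q + s)) =
      (logSinIntegral (q * t) - logSinIntegral (q * s)) / q := by
  have hq' : (q : ℝ) ≠ 0 := by positivity
  have sum_ae_eq : ∀ᵐ u : ℝ, u ∈ uIoc s t →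
      ∑ r ∈ Finset.range q, logSin (r / q + u) = logSin (q * u) := by
    filter_upwards [(countable_range fun k : ℤ => (k : ℝ) / q).ae_notMem volume] with u hu _
    exact sum_logSin_add hq fun k hk => hu ⟨k, by simp only [← hk]; field_simp⟩
  calc ∑ r ∈ Finset.range q, (logSinIntegral (r / q + t) - logSinIntegral (r / q + s))
      = ∑ r ∈ Finset.range q, ∫ u in s..t, logSin (r / q + u) := by
        simp_rw [intervalIntegral.integral_comp_add_left logSin, integral_logSin]
    _ = ∫ u in s..t, ∑ r ∈ Finset.range q, logSin (r / q + u) :=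
        (intervalIntegral.integral_finsetSum fun r _ => by
          simpa using intervalIntegrable_logSin_comp_affine (r / q) 1 s t).symm
    _ = ∫ u in s..t, logSin (q * u) := intervalIntegral.integral_congr_ae sum_ae_eq
    _ = (logSinIntegral (q * t) - logSinIntegral (q * s)) / q := by
        rw [intervalIntegral.integral_comp_mul_left logSin hq', integral_logSin, smul_eq_mul,
          div_eq_inv_mul]

end Residues

section RationalApproximation

variable {m q : ℕ} {p : ℤ} {ε : ℝ}

lemma sum_floor_sub_floor_le (m q : ℕ) (x : ℝ) :
    ∑ k ∈ Finset.range m, ((⌊((q + k : ℕ) + 1) * x⌋ : ℝ) - ⌊((k : ℕ) + 1) * x⌋) ≤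
      q * (m * x + 1) := by
  rw [sum_range_shift_sub (fun k : ℕ => (⌊(k + 1) * x⌋ : ℝ))]
  refine (Finset.sum_le_card_nsmul _ _ (m * x + 1) fun j _ => ?_).trans_eq
    (by rw [Finset.card_range, nsmul_eq_mul])
  have h₁ := Int.floor_le (((m + j : ℕ) + 1) * x)
  have h₂ := (Int.lt_floor_add_one ((j + 1) * x)).le
  push_cast at h₁ ⊢
  linarith

lemma sum_range_cast (q : ℕ) : ∑ j ∈ Finset.range q, (j : ℝ) = q * (q - 1) / 2 := by
  induction q with
  | zero => simp
  | succ q ih => rw [Finset.sum_range_succ, ih]; push_cast; ring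

lemma sum_logSinIntegral_le (hq : 0 < q) (hpq : IsCoprime p (q : ℤ)) (hε : 0 ≤ ε) (c : ℕ) :
    ∑ j ∈ Finset.range q, logSinIntegral ((c + j) * (p / q + ε)) ≤
      ∑ r ∈ Finset.range q, logSinIntegral (r / q + c * ε) +
        q * (q - 1) / 2 * (ε * log 2) := by
  rw [← sum_range_residues logSinIntegral_periodic hq hpq c, ← sum_range_cast, Finset.sum_mul,
    ← Finset.sum_add_distrib]
  refine Finset.sum_le_sum fun j _ => ?_
  have hstep : (c + j) * (p / q + ε) - (((c : ℤ) + j) * p / q + c * ε) = j * ε := by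
    push_cast; ring
  have hjε : 0 ≤ j * ε := by positivity
  have := logSinIntegral_sub_le (sub_nonneg.1 (hstep ▸ hjε))
  rw [hstep] at this
  linarith

lemma le_sum_logSinIntegral (hq : 0 < q) (hpq : IsCoprime p (q : ℤ)) (hε : 0 ≤ ε) (c : ℕ) :
    ∑ r ∈ Finset.range q, logSinIntegral (r / q + (c + q - 1) * ε) ≤
      ∑ j ∈ Finset.range q, logSinIntegral ((c + j) * (p / q + ε)) +
        q * (q - 1) / 2 * (ε * log 2) := by
  have hsum : (q : ℝ) * (q - 1) / 2 = ∑ j ∈ Finset.range q, ((q : ℝ) - 1 - j) := by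
    rw [Finset.sum_sub_distrib, sum_range_cast, Finset.sum_const, Finset.card_range, nsmul_eq_mul]
    ring
  rw [← sum_range_residues logSinIntegral_periodic hq hpq c, hsum, Finset.sum_mul,
    ← Finset.sum_add_distrib]
  refine Finset.sum_le_sum fun j hj => ?_
  have hstep : ((c : ℤ) + j) * p / q + (c + q - 1) * ε - (c + j) * (p / q + ε) =
      (q - 1 - j) * ε := by
    push_cast; ring
  have hjq : (j : ℝ) + 1 ≤ q := by exact_mod_cast Finset.mem_range.1 hj
  have := logSinIntegral_sub_le
    (sub_nonneg.1 (hstep ▸ mul_nonneg (by linarith : (0 : ℝ) ≤ q - 1 - j) hε))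
  rw [hstep] at this
  linarith

lemma sum_logSinIntegral_sub_le (hq : 0 < q) (hpq : IsCoprime p (q : ℤ)) (hε : 0 ≤ ε) :
    ∑ j ∈ Finset.range q, (logSinIntegral (((m + j : ℕ) + 1) * (p / q + ε)) -
        logSinIntegral ((j + 1) * (p / q + ε))) ≤
      (logSinIntegral (q * ((m + 1) * ε)) - logSinIntegral (q * (q * ε))) / q +
        q * (q - 1) * (ε * log 2) := by
  have upper := sum_logSinIntegral_le hq hpq hε (m + 1)
  have lower := le_sum_logSinIntegral hq hpq hε 1
  have hdist := sum_logSinIntegral_add_sub hq (q * ε) ((m + 1) * ε)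
  rw [Finset.sum_sub_distrib] at hdist ⊢
  have hm : ∀ j : ℕ, ((m + 1 : ℕ) + j : ℝ) = (m + j : ℕ) + 1 := by intro j; push_cast; ring
  simp only [hm, Nat.cast_one, add_comm (1 : ℝ), add_sub_cancel_right] at upper lower
  push_cast at upper lower ⊢
  linarith

/-- Trapezoid rule with step `q ε`: since `q (p / q + ε)` is `q ε` modulo `1`, the points `k x` and
`(k + q) x` are adjacent nodes. -/
lemma sum_logSin_le_sum_logSinIntegral {x : ℝ} (hx : q * x = p + q * ε) (hε : 0 < q * ε)
    (hε' : q * ε < 1) (hns : ∀ k < m + q, ∀ z : ℤ, (k + 1) * x ≠ z) :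
    ∑ k ∈ Finset.range (m + q), logSin ((k + 1) * x) ≤
      (∑ j ∈ Finset.range q, (logSinIntegral (((m + j : ℕ) + 1) * x) -
        logSinIntegral ((j + 1) * x))) / (q * ε) + m * (q * ε) + q + q * log 2 := by
  have trapezoid_le : ∀ k ∈ Finset.range m,
      (logSin ((k + 1) * x) + logSin (((q + k : ℕ) + 1) * x)) / 2 ≤
        (logSinIntegral (((q + k : ℕ) + 1) * x) - logSinIntegral ((k + 1) * x)) / (q * ε) +
          (((⌊((q + k : ℕ) + 1) * x⌋ : ℝ) - ⌊(k + 1) * x⌋) - p) := by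
    intro k hk
    have hk := Finset.mem_range.1 hk
    have hshift : ((q + k : ℕ) + 1) * x = (k + 1) * x + q * ε + p := by
      push_cast; linear_combination hx
    have := trapezoid_logSin_le (s := (k + 1) * x) hε hε' (hns k (by omega)) fun z hz =>
      hns (q + k) (by omega) (z + p) (by rw [hshift, hz]; push_cast; ring)
    rw [hshift, logSin_add_intCast, logSinIntegral_add_intCast, Int.floor_add_intCast]
    push_cast
    linarith
  have hsum := Finset.sum_le_sum trapezoid_le
  have hfloor := sum_floor_sub_floor_le m q x
  have hdouble := sum_range_shift_add (fun k : ℕ => logSin ((k + 1) * x)) m q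
  have hends : ∑ j ∈ Finset.range q, (logSin ((j + 1) * x) + logSin (((m + j : ℕ) + 1) * x)) ≤
      q * (2 * log 2) := by
    refine (Finset.sum_le_card_nsmul _ _ (2 * log 2) fun j _ => ?_).trans_eq (by simp)
    linarith [logSin_le_log_two ((j + 1) * x), logSin_le_log_two (((m + j : ℕ) + 1) * x)]
  rw [← Finset.sum_div, Finset.sum_add_distrib (f := fun _ => _ / _), ← Finset.sum_div,
    Finset.sum_sub_distrib (f := fun _ => _ - _) (g := fun _ => (p : ℝ)),
    sum_range_shift_sub (fun k : ℕ => logSinIntegral ((k + 1) * x)), Finset.sum_const,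
    Finset.card_range, nsmul_eq_mul] at hsum
  rw [two_nsmul] at hdouble
  linear_combination hsum + hfloor + hends / 2 - hdouble / 2 + m * hx

lemma sum_logSin_le_of_coprime (hq : 0 < q) (hpq : IsCoprime p (q : ℤ)) (hε : 0 < ε)
    (hqε : q * ε < 1) (hns : ∀ k < m + q, ∀ z : ℤ, (k + 1) * (p / q + ε) ≠ z) :
    ∑ k ∈ Finset.range (m + q), logSin ((k + 1) * (p / q + ε)) ≤
      (logSinIntegral (q * ((m + 1) * ε)) - logSinIntegral (q * (q * ε))) / (q * (q * ε)) +
        (2 * q - 1) * log 2 + m * (q * ε) + q := by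
  have hqε₀ : 0 < q * ε := by positivity
  refine (sum_logSin_le_sum_logSinIntegral (by field_simp) hqε₀ hqε hns).trans ?_
  have := (div_le_div_iff_of_pos_right hqε₀).2 (sum_logSinIntegral_sub_le (m := m) hq hpq hε.le)
  rw [add_div, div_div,
    show q * (q - 1) * (ε * log 2) = (q - 1) * log 2 * (q * ε) by ring,
    mul_div_cancel_right₀ _ hqε₀.ne'] at this
  linarith

end RationalApproximation

section GrowthOutsideFirstArc

lemma neg_logSinIntegral_div_le {z b : ℝ} (hz : 0 < z) (hz' : z < 1) (hb : 1 ≤ b)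
    (h : 1 / b ≤ 4 * z) : -logSinIntegral z / z ≤ 1 + log b := by
  have hlog := log_nonneg hb
  rw [div_le_iff₀ hz]
  rcases le_total z (1 / 2) with h₂ | h₂
  · have hlogSin : -log b ≤ logSin z :=
      calc -log b = log (1 / b) := by rw [one_div, log_inv]
        _ ≤ log (4 * z) := log_le_log (by positivity) h
        _ ≤ logSin z := log_four_mul_le_logSin hz h₂
    nlinarith [mul_logSin_sub_self_le_logSinIntegral hz hz']
  · nlinarith [logSinIntegral_nonneg h₂ hz'.le]

lemma integral_logSin_mul {z : ℝ} (hz : z ≠ 0) (b : ℝ) :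
    ∫ v in (1 : ℝ)..b, logSin (z * v) = (logSinIntegral (b * z) - logSinIntegral z) / z := by
  rw [intervalIntegral.integral_comp_mul_left logSin hz, integral_logSin, mul_one, mul_comm z b,
    smul_eq_mul, div_eq_inv_mul]

/-- On `b z ≤ 1 / 2` the left-hand side increases with `z`, so its maximum is at `b z = 1 / 2`. -/
lemma logSinIntegral_mul_sub_div_le_of_le_half {z b : ℝ} (hz : 0 < z) (hb : 1 < b)
    (h : b * z ≤ 1 / 2) : (logSinIntegral (b * z) - logSinIntegral z) / z ≤ 1 + log b := by
  have hw : 0 < 1 / (2 * b) := by positivity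
  have hbw : b * (1 / (2 * b)) = 1 / 2 := by field_simp
  have integrable : ∀ w, IntervalIntegrable (fun v => logSin (w * v)) volume 1 b := fun w => by
    simpa using intervalIntegrable_logSin_comp_affine 0 w 1 b
  calc (logSinIntegral (b * z) - logSinIntegral z) / z
      = ∫ v in (1 : ℝ)..b, logSin (z * v) := (integral_logSin_mul hz.ne' b).symm
    _ ≤ ∫ v in (1 : ℝ)..b, logSin (1 / (2 * b) * v) := by
        refine intervalIntegral.integral_mono_on hb.le (integrable _) (integrable _) fun v hv => ?_
        have hv₀ : 0 < v := by linarith [hv.1]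
        have hzw : z ≤ 1 / (2 * b) := by rw [le_div_iff₀ (by positivity)]; linarith
        have hvw : 1 / (2 * b) * v ≤ 1 / 2 := by
          rw [← hbw, mul_comm b]; gcongr; exact hv.2
        have hzv : z * v ≤ 1 / (2 * b) * v := by gcongr
        exact logSin_le_logSin (by positivity) hzv (by linarith)
    _ = -logSinIntegral (1 / (2 * b)) / (1 / (2 * b)) := by
        rw [integral_logSin_mul hw.ne', hbw, logSinIntegral_half, zero_sub]
    _ ≤ 1 + log b := by
        refine neg_logSinIntegral_div_le hw ?_ hb.le ?_
        · rw [div_lt_one (by positivity)]; linarith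
        · rw [mul_one_div, div_le_div_iff₀ (by positivity) (by positivity)]; linarith

lemma logSinIntegral_mul_sub_div_le {z b : ℝ} (hz : 0 < z) (hz' : z < 1) (hb : 1 < b) :
    (logSinIntegral (b * z) - logSinIntegral z) / z ≤
      b * max 0 (logSinIntegral (b * z) / (b * z)) + (1 + log b) := by
  rcases le_total (b * z) (1 / 2) with h | h
  · have : 0 ≤ b * max 0 (logSinIntegral (b * z) / (b * z)) := by positivity
    linarith [logSinIntegral_mul_sub_div_le_of_le_half hz hb h]
  · have hsplit : (logSinIntegral (b * z) - logSinIntegral z) / z =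
        b * (logSinIntegral (b * z) / (b * z)) + -logSinIntegral z / z := by
      field_simp; ring
    rw [hsplit]
    gcongr
    · exact le_max_right _ _
    · refine neg_logSinIntegral_div_le hz hz' hb.le ?_
      rw [div_le_iff₀ (by positivity)]; linarith

lemma max_logSinIntegral_div_le {c t : ℝ} (hc : 0 < c) (hct : c ≤ t) :
    max 0 (logSinIntegral t / t) ≤ 0.1676 / c := by
  refine max_le (by positivity) ?_
  calc logSinIntegral t / t ≤ 0.1676 / t := by gcongr; exacts [by linarith, logSinIntegral_le t]
    _ ≤ 0.1676 / c := by gcongr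

lemma mul_max_add_le_of_le_half {t b N δ : ℝ} (ht : 0 < t) (hN : 800 ≤ N) (hb : b ≤ N / 2)
    (hδt : δ ≤ t) (hδN : δ ≤ N / 10) :
    b * max 0 (logSinIntegral t / t) + δ ≤ 0.117 * N + 2 := by
  have hbN : b * max 0 (logSinIntegral t / t) ≤ N / 2 * max 0 (logSinIntegral t / t) := by gcongr
  rcases le_total t 5 with h | h
  · have : max 0 (logSinIntegral t / t) ≤ 0.226 :=
      max_le (by norm_num) ((div_le_iff₀ ht).2 (logSinIntegral_le_mul_self ht))
    nlinarith
  · nlinarith [max_logSinIntegral_div_le (by norm_num) h]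

lemma mul_max_add_le_of_one_le {t b N δ : ℝ} (ht : 1 ≤ t) (hN : 0 ≤ N) (hb : b ≤ N)
    (hδt : δ ≤ t) (hδN : δ ≤ N / 10) :
    b * max 0 (logSinIntegral t / t) + δ ≤ 0.117 * N + 10 := by
  have hbN : b * max 0 (logSinIntegral t / t) ≤ N * max 0 (logSinIntegral t / t) := by gcongr
  rcases le_total t (3 / 2) with h | h
  · have hnonpos : logSinIntegral t ≤ 0 := by
      rw [← sub_add_cancel t 1, logSinIntegral_periodic]
      exact logSinIntegral_nonpos (by linarith) (by linarith)
    rw [max_eq_left (div_nonpos_of_nonpos_of_nonneg hnonpos (by linarith))]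
    linarith
  rcases le_total t 10 with h' | h'
  · nlinarith [max_logSinIntegral_div_le (by norm_num) h]
  · nlinarith [max_logSinIntegral_div_le (by norm_num) h']

lemma sum_logSin_le_of_coprime_le_nine {n q : ℕ} (hn : 800 ≤ n) (hq : 0 < q) (hq₉ : q ≤ 9)
    {p : ℤ} (hpq : IsCoprime p (q : ℤ)) {ε : ℝ} (hε : 0 < ε) (hqε : q * ε ≤ 1 / 10)
    (hone : q = 1 → 1 / (n : ℝ) ≤ ε) (hns : ∀ k < n, ∀ z : ℤ, (k + 1) * (p / q + ε) ≠ z) :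
    ∑ k ∈ Finset.range n, logSin ((k + 1) * (p / q + ε)) ≤ 0.117 * n + 24 + log n := by
  obtain ⟨m, rfl⟩ : ∃ m, n = m + q := ⟨n - q, by omega⟩
  refine (sum_logSin_le_of_coprime hq hpq hε (by linarith) hns).trans ?_
  set z : ℝ := q * (q * ε) with hz
  set b : ℝ := (m + 1) / q with hb
  have hq₁ : (1 : ℝ) ≤ q := by exact_mod_cast hq
  have hq₉' : (q : ℝ) ≤ 9 := by exact_mod_cast hq₉
  have hN : (800 : ℝ) ≤ m + q := by exact_mod_cast hn
  have hbz : q * ((m + 1) * ε) = b * z := by rw [hb, hz]; field_simp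
  have hb₁ : 1 < b := by rw [hb, lt_div_iff₀ (by linarith)]; linarith
  have hbN : b ≤ m + q := by rw [hb, div_le_iff₀ (by linarith)]; nlinarith
  have hint := logSinIntegral_mul_sub_div_le (by positivity : 0 < z) (by nlinarith) hb₁
  have hlog := log_le_log (by linarith) hbN
  have hδt : m * (q * ε) ≤ b * z := by rw [← hbz]; nlinarith [mul_pos (zero_lt_one.trans_le hq₁) hε]
  have hδN : m * (q * ε) ≤ (m + q) / 10 := by nlinarith [(m.cast_nonneg : (0 : ℝ) ≤ m)]
  rw [hbz]
  push_cast
  rcases (Nat.succ_le_of_lt hq).eq_or_lt with rfl | hq₂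
  · have hbz₁ : 1 ≤ b * z := by
      have := (div_le_iff₀ (by positivity)).1 (hone rfl)
      rw [← hbz]; push_cast at this ⊢; linarith
    have := mul_max_add_le_of_one_le hbz₁ (by linarith) hbN hδt hδN
    push_cast at *
    linarith [log_two_lt_d9]
  · have hq₂' : (2 : ℝ) ≤ q := by exact_mod_cast hq₂
    have hb_half : b ≤ (m + q) / 2 := by rw [hb, div_le_iff₀ (by linarith)]; nlinarith
    have := mul_max_add_le_of_le_half (by positivity : 0 < b * z) hN hb_half hδt hδN
    have : (2 * (q : ℝ) - 1) * log 2 ≤ (2 * 9 - 1) * 0.6931471808 := by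
      gcongr; exact log_two_lt_d9.le
    linarith

lemma sum_logSin_le_of_abs_sub_le {n : ℕ} (hn : 800 ≤ n) {x : ℝ} {r : ℚ} (hr₉ : r.den ≤ 9)
    (hr : r.den * |x - r| ≤ 1 / 10) (hone : r.den = 1 → 1 / (n : ℝ) ≤ |x - r|)
    (hns : ∀ k < n, ∀ z : ℤ, (k + 1) * x ≠ z) :
    ∑ k ∈ Finset.range n, logSin ((k + 1) * x) ≤ 0.117 * n + 24 + log n := by
  have hcop : IsCoprime r.num (r.den : ℤ) := Int.isCoprime_iff_gcd_eq_one.2 r.reduced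
  have hcast : (r : ℝ) = r.num / r.den := by exact_mod_cast (Rat.num_div_den r).symm
  have hne : x - r ≠ 0 := by
    intro h
    have hlast : ((r.den - 1 : ℕ) + 1 : ℝ) = r.den := by
      rw [Nat.cast_sub r.den_pos]; simp
    refine hns (r.den - 1) (by omega) r.num ?_
    rw [hlast, sub_eq_zero.1 h]
    exact_mod_cast Rat.den_mul_eq_num r
  rcases lt_or_gt_of_ne hne with hneg | hpos
  · rw [abs_of_neg hneg] at hr hone
    have hx : ((-r.num : ℤ) : ℝ) / r.den + -(x - r) = -x := by rw [hcast]; push_cast; ring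
    have := sum_logSin_le_of_coprime_le_nine hn r.den_pos hr₉ hcop.neg_left (neg_pos.2 hneg) hr
      hone fun k hk z hz => hns k hk (-z) (by rw [hx] at hz; push_cast; linarith)
    simpa only [hx, mul_neg, logSin_neg] using this
  · rw [abs_of_pos hpos] at hr hone
    have hx : (r.num : ℝ) / r.den + (x - r) = x := by rw [hcast]; ring
    have := sum_logSin_le_of_coprime_le_nine hn r.den_pos hr₉ hcop hpos hr hone
      (by simpa only [hx] using hns)
    simpa only [hx] using this

lemma sum_logSin_le_of_one_div_le {n : ℕ} (hn : 800 ≤ n) {x : ℝ} (h₁ : 1 / (n : ℝ) ≤ x)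
    (h₂ : x ≤ 1 / 2) (hns : ∀ k < n, ∀ z : ℤ, (k + 1) * x ≠ z) :
    ∑ k ∈ Finset.range n, logSin ((k + 1) * x) ≤ 0.117 * n + 24 + log n := by
  obtain ⟨r, hr, hr₉⟩ := exists_rat_abs_sub_le_and_den_le x (n := 9) (by norm_num)
  have hden : (0 : ℝ) < r.den := by exact_mod_cast r.den_pos
  have hr' : r.den * |x - r| ≤ 1 / 10 := by
    rw [le_div_iff₀ (by positivity)] at hr
    push_cast at hr
    linarith
  refine sum_logSin_le_of_abs_sub_le hn hr₉ hr' (fun hone => ?_) hns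
  have hcast : (r : ℝ) = r.num := by
    exact_mod_cast (Rat.coe_int_num_of_den_eq_one hone).symm
  rw [hone, Nat.cast_one, one_mul, hcast, abs_le] at hr'
  have hx₀ : 0 ≤ x := le_trans (by positivity) h₁
  have hlow : (-1 : ℤ) < r.num := by exact_mod_cast (by linarith : (-1 : ℝ) < r.num)
  have hupp : r.num < 1 := by exact_mod_cast (by linarith : (r.num : ℝ) < 1)
  rwa [hcast, show r.num = 0 by omega, Int.cast_zero, sub_zero, abs_of_nonneg hx₀]

end GrowthOutsideFirstArc

/-- The product `∏ₖ 2 sin (π k x)` over `1 ≤ k ≤ n`. Up to a sign and a power of `i`, it is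
`(q; q)_n` with the phase `q ^ (n (n + 1) / 4)` removed, at `q = exp (2 π i x)`. -/
noncomputable def sineProd (n : ℕ) (x : ℝ) : ℝ :=
  ∏ k ∈ Finset.range n, (2 * sin (π * ((k + 1) * x)))

lemma log_sineProd {n : ℕ} {x : ℝ} (h : sineProd n x ≠ 0) :
    log (sineProd n x) = ∑ k ∈ Finset.range n, logSin ((k + 1) * x) :=
  log_prod (Finset.prod_ne_zero_iff.1 h)

lemma abs_sineProd_le {n : ℕ} (hn : 800 ≤ n) {x : ℝ} (h₁ : 1 / (n : ℝ) ≤ x) (h₂ : x ≤ 1 / 2) :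
    |sineProd n x| ≤ n * exp (0.117 * n + 24) := by
  have hn₀ : (0 : ℝ) < n := by exact_mod_cast (by omega : 0 < n)
  by_cases hzero : sineProd n x = 0
  · rw [hzero, abs_zero]; positivity
  have hsum := sum_logSin_le_of_one_div_le hn h₁ h₂ fun k hk z hz =>
    Finset.prod_ne_zero_iff.1 hzero k (Finset.mem_range.2 hk)
      (by rw [sin_pi_mul_eq_zero_iff.2 ⟨z, hz⟩, mul_zero])
  rw [← log_sineProd hzero, ← log_abs, log_le_iff_le_exp (abs_pos.2 hzero), exp_add,
    exp_log hn₀] at hsum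
  rwa [mul_comm]

section SineProduct

variable {n : ℕ} {x : ℝ}

lemma add_one_mul_mem_Ioo {k : ℕ} (hk : k < n) (hx₀ : 0 < x) (hx₁ : n * x < 1) :
    (k + 1) * x ∈ Ioo (0 : ℝ) 1 := by
  have hkn : (k : ℝ) + 1 ≤ n := by exact_mod_cast hk
  exact ⟨by positivity, (mul_le_mul_of_nonneg_right hkn hx₀.le).trans_lt hx₁⟩

lemma sineProd_pos (hx₀ : 0 < x) (hx₁ : n * x < 1) : 0 < sineProd n x :=
  Finset.prod_pos fun _ hk =>
    have hmem := add_one_mul_mem_Ioo (Finset.mem_range.1 hk) hx₀ hx₁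
    mul_pos two_pos (sin_pi_mul_pos hmem.1 hmem.2)

lemma sineProd_zero_right (hn : n ≠ 0) : sineProd n 0 = 0 :=
  Finset.prod_eq_zero (Finset.mem_range.2 (Nat.pos_of_ne_zero hn)) (by simp)

lemma sineProd_one_div (hn : n ≠ 0) : sineProd n (1 / n) = 0 := by
  refine Finset.prod_eq_zero (Finset.mem_range.2 (Nat.sub_one_lt hn)) ?_
  have hlast : ((n - 1 : ℕ) + 1 : ℝ) = n := by exact_mod_cast Nat.succ_pred_eq_of_ne_zero hn
  rw [hlast, mul_one_div_cancel (Nat.cast_ne_zero.2 hn), mul_one, sin_pi, mul_zero]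

lemma sineProd_nonneg (hx₀ : 0 ≤ x) (hx₁ : x ≤ 1 / n) : 0 ≤ sineProd n x := by
  rcases eq_or_ne n 0 with rfl | hn
  · simp [sineProd]
  rcases hx₀.eq_or_lt with rfl | hx₀
  · exact (sineProd_zero_right hn).ge
  rcases hx₁.eq_or_lt with rfl | hx₁
  · exact (sineProd_one_div hn).ge
  · exact (sineProd_pos hx₀ ((lt_div_iff₀' (by positivity)).1 hx₁)).le

lemma contDiff_sineProd (n : ℕ) : ContDiff ℝ 1 (sineProd n) := by
  unfold sineProd
  fun_prop

lemma sineProd_eq_exp (hx₀ : 0 < x) (hx₁ : n * x < 1) :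
    sineProd n x = exp (∑ k ∈ Finset.range n, logSin ((k + 1) * x)) := by
  rw [← log_sineProd (sineProd_pos hx₀ hx₁).ne', exp_log (sineProd_pos hx₀ hx₁)]

lemma exp_le_sineProd (hn : 1 ≤ n) (h₁ : 3 / 4 ≤ (n + 1 / 2) * x)
    (h₂ : (n + 1 / 2) * x ≤ 5 / 6) : exp (0.189 * (n + 1 / 2)) ≤ sineProd n x := by
  have hx : 0 < x := pos_of_mul_pos_right (by linarith) (by positivity : (0 : ℝ) ≤ n + 1 / 2)
  have hxn : 1 * x ≤ n * x := by gcongr; exact_mod_cast hn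
  rw [sineProd_eq_exp hx (by linarith), exp_le_exp]
  refine le_trans ?_ (le_sum_logSin hx (by linarith))
  have hpeak := le_logSinIntegral h₁ h₂
  have hstart := logSinIntegral_nonpos (by linarith : 0 ≤ x / 2) (by linarith)
  rw [le_div_iff₀ hx]
  linarith

lemma log_le_div_eight_add_two {b : ℝ} (hb : 0 < b) : log b ≤ b / 8 + 2 := by
  have htangent := log_le_sub_one_of_pos (by positivity : 0 < b / 2 ^ 3)
  rw [log_div hb.ne' (by norm_num), log_pow] at htangent
  push_cast at htangent
  linarith [log_two_lt_d9]

lemma log_le_div_thousand_add_six {b : ℝ} (hb : 0 < b) : log b ≤ b / 1000 + 6 := by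
  have htangent := log_le_sub_one_of_pos (by positivity : 0 < b / 2 ^ 10)
  rw [log_div hb.ne' (by norm_num), log_pow] at htangent
  push_cast at htangent
  linarith [log_two_lt_d9]

lemma sineProd_lt_of_mul_le_half (hn : 800 ≤ n) (hx : 0 < x) (h : n * x ≤ 1 / 2) :
    sineProd n x < exp (0.189 * (n + 1 / 2)) := by
  obtain ⟨m, rfl⟩ := Nat.exists_eq_succ_of_ne_zero (by omega : n ≠ 0)
  have hn' : (800 : ℝ) ≤ (m + 1 : ℕ) := by exact_mod_cast hn
  rw [sineProd_eq_exp hx (by linarith), exp_lt_exp]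
  push_cast at h hn' ⊢
  refine (sum_logSin_le hx (by linarith)).trans_lt ?_
  linarith [logSinIntegral_mul_sub_div_le_of_le_half hx (by linarith) h, logSin_le_log_two x,
    logSin_le_log_two ((m + 1) * x), log_two_lt_d9, log_le_div_eight_add_two
      (by linarith : (0 : ℝ) < m + 1)]

lemma sineProd_lt_of_le_mul (hn : 800 ≤ n) (h₁ : 11 / 12 ≤ n * x) (h₂ : n * x < 1) :
    sineProd n x < exp (0.189 * (n + 1 / 2)) := by
  have hx : 0 < x := pos_of_mul_pos_right (by linarith) n.cast_nonneg
  obtain ⟨m, rfl⟩ := Nat.exists_eq_succ_of_ne_zero (by omega : n ≠ 0)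
  have hn' : (800 : ℝ) ≤ (m + 1 : ℕ) := by exact_mod_cast hn
  rw [sineProd_eq_exp hx (by linarith), exp_lt_exp]
  push_cast at h₁ h₂ hn' ⊢
  refine (sum_logSin_le hx h₂).trans_lt ?_
  have hx_half : x ≤ 1 / 2 := by
    have : 800 * x ≤ (m + 1) * x := by gcongr
    linarith
  have hright : logSinIntegral ((m + 1) * x) / x ≤ 0.1676 * (12 / 11) * (m + 1) := by
    rw [div_le_iff₀ hx]
    linarith [logSinIntegral_le ((m + 1) * x)]
  have hleft : -logSinIntegral x / x ≤ 1 - logSin x := by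
    rw [div_le_iff₀ hx]
    linarith [mul_logSin_sub_self_le_logSinIntegral hx (by linarith)]
  have hlog : -logSin x ≤ log (m + 1) := by
    refine (neg_le_neg (log_four_mul_le_logSin hx hx_half)).trans ?_
    rw [← log_inv]
    gcongr
    rw [inv_le_iff_one_le_mul₀ (by positivity)]
    linarith
  rw [sub_eq_add_neg, add_div]
  linarith [log_le_div_thousand_add_six (by linarith : (0 : ℝ) < m + 1),
    logSin_nonpos_of_five_sixths_le (by linarith : 5 / 6 ≤ (m + 1) * x) h₂.le]

end SineProduct

/-- `x₀` maximizes the sine product over the first arc `[0, 1 / n]`, and it stays away from the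
ends of that arc. -/
structure IsPeak (n : ℕ) (x₀ : ℝ) : Prop where
  isMaxOn : IsMaxOn (sineProd n) (Icc 0 (1 / n)) x₀
  half_lt : 1 / 2 < n * x₀
  lt_eleven_twelfths : n * x₀ < 11 / 12

lemma exists_isPeak {n : ℕ} (hn : 800 ≤ n) :
    ∃ x₀, IsPeak n x₀ := by
  have hn₀ : n ≠ 0 := by omega
  have hn_pos : (0 : ℝ) < n := by positivity
  obtain ⟨x₀, hx₀, hmax⟩ := (isCompact_Icc (a := (0 : ℝ)) (b := 1 / n)).exists_isMaxOn
    ⟨0, by simp⟩ (contDiff_sineProd n).continuous.continuousOn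
  have hpeak : exp (0.189 * (n + 1 / 2)) ≤ sineProd n x₀ := by
    have hcancel : (n + 1 / 2) * (3 / 4 / ((n : ℝ) + 1 / 2)) = 3 / 4 := by field_simp
    refine (exp_le_sineProd (by omega) hcancel.ge (by rw [hcancel]; norm_num)).trans
      (hmax ⟨by positivity, ?_⟩)
    gcongr <;> linarith
  have hpos := (exp_pos _).trans_le hpeak
  have hx₀_pos : 0 < x₀ := hx₀.1.lt_of_ne <| by
    rintro rfl; exact hpos.ne' (sineProd_zero_right hn₀)
  have hx₀_lt : x₀ < 1 / n := hx₀.2.lt_of_ne <| by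
    rintro rfl; exact hpos.ne' (sineProd_one_div hn₀)
  refine ⟨x₀, hmax, ?_, ?_⟩ <;> by_contra! h
  · exact (sineProd_lt_of_mul_le_half hn hx₀_pos h).not_ge hpeak
  · exact (sineProd_lt_of_le_mul hn h ((lt_div_iff₀' hn_pos).1 hx₀_lt)).not_ge hpeak

lemma concaveOn_sum_logSin (n : ℕ) :
    ConcaveOn ℝ (Ioo (0 : ℝ) (1 / n)) fun x => ∑ k ∈ Finset.range n, logSin ((k + 1) * x) := by
  rw [← Finset.sum_fn]
  refine Finset.sum_induction _ (ConcaveOn ℝ (Ioo 0 (1 / (n : ℝ)))) (fun _ _ => ConcaveOn.add)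
    (concaveOn_const 0 (convex_Ioo 0 _)) fun k hk => ?_
  have hn : (0 : ℝ) < n := by exact_mod_cast (Nat.zero_le k).trans_lt (Finset.mem_range.1 hk)
  exact (concaveOn_logSin.comp_linearMap (LinearMap.mulLeft ℝ ((k : ℝ) + 1))).subset
    (fun x hx => add_one_mul_mem_Ioo (Finset.mem_range.1 hk) hx.1 ((lt_div_iff₀' hn).1 hx.2))
    (convex_Ioo 0 _)

lemma min_sineProd_le {n : ℕ} {x y z : ℝ} (hx : 0 < x) (hz : n * z < 1) (hxy : x ≤ y)
    (hyz : y ≤ z) : min (sineProd n x) (sineProd n z) ≤ sineProd n y := by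
  rcases n.eq_zero_or_pos with rfl | hn
  · simp [sineProd]
  have hmem : ∀ w, x ≤ w → w ≤ z → n * w < 1 := fun w _ hwz =>
    (mul_le_mul_of_nonneg_left hwz n.cast_nonneg).trans_lt hz
  have hIoo : ∀ w, x ≤ w → w ≤ z → w ∈ Ioo 0 (1 / (n : ℝ)) := fun w hxw hwz =>
    ⟨hx.trans_le hxw, (lt_div_iff₀' (by positivity)).2 (hmem w hxw hwz)⟩
  have hxz := hxy.trans hyz
  rw [sineProd_eq_exp hx (hmem x le_rfl hxz), sineProd_eq_exp (hx.trans_le hxy) (hmem y hxy hyz),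
    sineProd_eq_exp (hx.trans_le hxz) hz, ← exp_monotone.map_min, exp_le_exp]
  exact (concaveOn_sum_logSin n).min_le_of_mem_Icc (hIoo x le_rfl hxz) (hIoo z hxz le_rfl)
    ⟨hxy, hyz⟩

lemma one_sub_sum_le_prod_one_sub {ι : Type*} {s : Finset ι} {r : ι → ℝ}
    (h₀ : ∀ k ∈ s, 0 ≤ r k) (h₁ : ∀ k ∈ s, r k ≤ 1) :
    1 - ∑ k ∈ s, r k ≤ ∏ k ∈ s, (1 - r k) := by
  classical
  induction s using Finset.induction_on with
  | empty => simp
  | insert a s ha ih =>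
    rw [Finset.forall_mem_insert] at h₀ h₁
    have hprod : ∏ k ∈ s, (1 - r k) ≤ 1 := Finset.prod_le_one
      (fun k hk => sub_nonneg.2 (h₁.2 k hk)) fun k hk => sub_le_self 1 (h₀.2 k hk)
    rw [Finset.sum_insert ha, Finset.prod_insert ha]
    nlinarith [ih h₀.2 h₁.2]

lemma sum_one_div_sq_le {x : ℝ} (hx : 0 < x) {j : ℕ} (h : j * x < 1) :
    ∑ k ∈ Finset.range j, 1 / (1 - (k + 1) * x) ^ 2 ≤
      1 / (1 - j * x) ^ 2 + 1 / (x * (1 - j * x)) := by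
  induction j with
  | zero => rw [Finset.sum_range_zero, Nat.cast_zero, zero_mul, sub_zero]; positivity
  | succ j ih =>
    push_cast at h ⊢
    have hu : 0 < 1 - (j + 1) * x := by linarith
    have hux : 1 - j * x = 1 - (j + 1) * x + x := by ring
    have htelescope : 1 / (1 - j * x) ^ 2 + 1 / (x * (1 - j * x)) ≤
        1 / (x * (1 - (j + 1) * x)) := by
      rw [hux]
      generalize 1 - (j + 1) * x = u at hu
      rw [div_add_div _ _ (by positivity) (by positivity),
        div_le_div_iff₀ (by positivity) (by positivity)]
      have : 0 ≤ x ^ 3 * (u + x) := by positivity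
      nlinarith
    rw [Finset.sum_range_succ]
    linarith [ih (by linarith)]

lemma one_div_sin_sq_le {v : ℝ} (h₀ : 0 < v) (h₁ : v < 1) :
    1 / sin (π * v) ^ 2 ≤ 1 / (4 * v ^ 2) + 1 / (4 * (1 - v) ^ 2) := by
  have key : ∀ w : ℝ, 0 < w → w ≤ 1 / 2 → 1 / sin (π * w) ^ 2 ≤ 1 / (4 * w ^ 2) := by
    intro w hw₀ hw₁
    rw [show 4 * w ^ 2 = (2 * w) ^ 2 by ring]
    gcongr
    exact two_mul_le_sin_pi_mul hw₀.le hw₁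
  rcases le_total v (1 / 2) with h | h
  · exact (key v h₀ h).trans (le_add_of_nonneg_right (by positivity))
  · have := key (1 - v) (by linarith) (by linarith)
    rw [mul_one_sub, sin_pi_sub] at this
    exact this.trans (le_add_of_nonneg_left (by positivity))

lemma sineProd_add_mul_sineProd_sub {n : ℕ} {x : ℝ} (t : ℝ) (hx₀ : 0 < x) (hx₁ : n * x < 1) :
    sineProd n (x + t) * sineProd n (x - t) = sineProd n x ^ 2 * ∏ k ∈ Finset.range n,
      (1 - sin (π * ((k + 1) * t)) ^ 2 / sin (π * ((k + 1) * x)) ^ 2) := by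
  unfold sineProd
  rw [← Finset.prod_mul_distrib, ← Finset.prod_pow, ← Finset.prod_mul_distrib]
  refine Finset.prod_congr rfl fun k hk => ?_
  have hmem := add_one_mul_mem_Ioo (Finset.mem_range.1 hk) hx₀ hx₁
  have hsin := (sin_pi_mul_pos hmem.1 hmem.2).ne'
  have hcancel {s : ℝ} (hs : s ≠ 0) (u : ℝ) :
      (2 * s) ^ 2 * (1 - u / s ^ 2) = 4 * (s ^ 2 - u) := by field_simp; ring
  rw [hcancel hsin, mul_add, mul_sub, mul_add π, mul_sub π, sin_add, sin_sub]
  linear_combination 4 * sin (π * ((k + 1) * x)) ^ 2 * sin_sq_add_cos_sq (π * ((k + 1) * t)) -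
    4 * sin (π * ((k + 1) * t)) ^ 2 * sin_sq_add_cos_sq (π * ((k + 1) * x))

lemma integral_one_sub_mul_sq (c d : ℝ) :
    ∫ t in (-d)..d, (1 - c * t ^ 2) = 2 * d - 2 / 3 * c * d ^ 3 := by
  rw [intervalIntegral.integral_sub intervalIntegrable_const
    (Continuous.intervalIntegrable (by fun_prop) _ _), intervalIntegral.integral_const,
    intervalIntegral.integral_const_mul, integral_pow, smul_eq_mul]
  push_cast
  ring

lemma sin_sq_div_sin_sq_le {k : ℕ} {x : ℝ} (t : ℝ) (hk : k < n) (hx₀ : 0 < x) (hx₁ : n * x < 1) :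
    sin (π * ((k + 1) * t)) ^ 2 / sin (π * ((k + 1) * x)) ^ 2 ≤
      5 / 2 * t ^ 2 * (1 / x ^ 2 + n ^ 2 * (1 / (1 - (k + 1) * x) ^ 2)) := by
  have hmem := add_one_mul_mem_Ioo hk hx₀ hx₁
  have hne : 1 - (k + 1) * x ≠ 0 := (sub_pos.2 hmem.2).ne'
  have hpi : π ^ 2 ≤ 10 := by nlinarith [pi_lt_d2, pi_pos]
  have hsin : sin (π * ((k + 1) * t)) ^ 2 ≤ 10 * ((k + 1) * t) ^ 2 :=
    calc sin (π * ((k + 1) * t)) ^ 2 ≤ (π * ((k + 1) * t)) ^ 2 := sq_le_sq.2 abs_sin_le_abs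
      _ = π ^ 2 * ((k + 1) * t) ^ 2 := mul_pow _ _ 2
      _ ≤ 10 * ((k + 1) * t) ^ 2 := by gcongr
  rw [div_eq_mul_one_div]
  calc sin (π * ((k + 1) * t)) ^ 2 * (1 / sin (π * ((k + 1) * x)) ^ 2)
      ≤ 10 * ((k + 1) * t) ^ 2 *
        (1 / (4 * ((k + 1) * x) ^ 2) + 1 / (4 * (1 - (k + 1) * x) ^ 2)) := by
        gcongr; exact one_div_sin_sq_le hmem.1 hmem.2
    _ = 5 / 2 * t ^ 2 * (1 / x ^ 2 + (k + 1) ^ 2 * (1 / (1 - (k + 1) * x) ^ 2)) := by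
        field_simp; ring
    _ ≤ 5 / 2 * t ^ 2 * (1 / x ^ 2 + n ^ 2 * (1 / (1 - (k + 1) * x) ^ 2)) := by
        gcongr; exact_mod_cast hk

namespace IsPeak

variable {n : ℕ} {x₀ : ℝ}

lemma pos (h : IsPeak n x₀) : 0 < x₀ :=
  pos_of_mul_pos_right (one_half_pos.trans h.half_lt) n.cast_nonneg

lemma mul_lt_one (h : IsPeak n x₀) : n * x₀ < 1 :=
  h.lt_eleven_twelfths.trans (by norm_num)

lemma ne_zero (h : IsPeak n x₀) : n ≠ 0 := by
  rintro rfl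
  simpa using one_half_pos.trans h.half_lt

lemma lt_one_div (h : IsPeak n x₀) : x₀ < 1 / n :=
  (lt_div_iff₀' (Nat.cast_pos.2 (Nat.pos_of_ne_zero h.ne_zero))).2 h.mul_lt_one

lemma sineProd_pos (h : IsPeak n x₀) : 0 < sineProd n x₀ :=
  QPochhammer.sineProd_pos h.pos h.mul_lt_one

lemma monotoneOn (h : IsPeak n x₀) : MonotoneOn (sineProd n) (Icc 0 x₀) := by
  intro x hx y hy hxy
  have hle := h.lt_one_div.le
  rcases hx.1.eq_or_lt with rfl | hx_pos
  · rw [sineProd_zero_right h.ne_zero]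
    exact sineProd_nonneg hy.1 (hy.2.trans hle)
  · have := min_sineProd_le hx_pos h.mul_lt_one hxy hy.2
    rwa [min_eq_left (h.isMaxOn ⟨hx.1, hx.2.trans hle⟩)] at this

lemma antitoneOn (h : IsPeak n x₀) : AntitoneOn (sineProd n) (Icc x₀ (1 / n)) := by
  intro x hx y hy hxy
  have hn : (0 : ℝ) < n := Nat.cast_pos.2 (Nat.pos_of_ne_zero h.ne_zero)
  rcases hy.2.eq_or_lt with rfl | hy_lt
  · rw [sineProd_one_div h.ne_zero]
    exact sineProd_nonneg (h.pos.le.trans hx.1) hx.2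
  · have := min_sineProd_le h.pos ((lt_div_iff₀' hn).1 hy_lt) hx.1 hxy
    rwa [min_eq_right (h.isMaxOn ⟨h.pos.le.trans hy.1, hy.2⟩)] at this

lemma sum_sin_sq_div_sin_sq_le (h : IsPeak n x₀) (hn : 800 ≤ n) (t : ℝ) :
    ∑ k ∈ Finset.range n, sin (π * ((k + 1) * t)) ^ 2 / sin (π * ((k + 1) * x₀)) ^ 2 ≤
      48 * n ^ 3 * t ^ 2 := by
  have hx₀ := h.pos
  have hlow := h.half_lt
  have hupp := h.lt_eleven_twelfths
  have hgap : 0 < 1 - n * x₀ := sub_pos.2 h.mul_lt_one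
  have hn' : (800 : ℝ) ≤ n := by exact_mod_cast hn
  have hinv_sq : 1 / x₀ ^ 2 ≤ 4 * n ^ 2 := by
    rw [div_le_iff₀ (by positivity)]
    nlinarith
  have hsum : ∑ k ∈ Finset.range n, 1 / (1 - (k + 1) * x₀) ^ 2 ≤ 144 + 14 * (n : ℝ) := by
    refine (sum_one_div_sq_le hx₀ h.mul_lt_one).trans (add_le_add ?_ ?_)
    · rw [div_le_iff₀ (by positivity)]
      nlinarith
    · rw [div_le_iff₀ (by positivity)]
      nlinarith
  have hcubic : (n : ℝ) * (4 * n ^ 2) + n ^ 2 * (144 + 14 * n) ≤ 96 / 5 * n ^ 3 := by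
    have : 0 ≤ (n : ℝ) ^ 2 * (n - 800) := mul_nonneg (by positivity) (by linarith)
    nlinarith
  calc ∑ k ∈ Finset.range n, sin (π * ((k + 1) * t)) ^ 2 / sin (π * ((k + 1) * x₀)) ^ 2
      ≤ ∑ k ∈ Finset.range n,
        5 / 2 * t ^ 2 * (1 / x₀ ^ 2 + n ^ 2 * (1 / (1 - (k + 1) * x₀) ^ 2)) :=
        Finset.sum_le_sum fun k hk =>
          sin_sq_div_sin_sq_le t (Finset.mem_range.1 hk) hx₀ h.mul_lt_one
    _ = 5 / 2 * t ^ 2 * (n * (1 / x₀ ^ 2) +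
        n ^ 2 * ∑ k ∈ Finset.range n, 1 / (1 - (k + 1) * x₀) ^ 2) := by
        rw [← Finset.mul_sum, Finset.sum_add_distrib, ← Finset.mul_sum, Finset.sum_const,
          Finset.card_range, nsmul_eq_mul]
    _ ≤ 5 / 2 * t ^ 2 * (n * (4 * n ^ 2) + n ^ 2 * (144 + 14 * n)) := by gcongr
    _ ≤ 5 / 2 * t ^ 2 * (96 / 5 * n ^ 3) := by gcongr
    _ = 48 * n ^ 3 * t ^ 2 := by ring

lemma add_mem_Icc (h : IsPeak n x₀) {t : ℝ} (ht : |t| ≤ 1 / (12 * n)) :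
    x₀ + t ∈ Icc (0 : ℝ) (1 / n) := by
  have hn₀ : (0 : ℝ) < n := Nat.cast_pos.2 (Nat.pos_of_ne_zero h.ne_zero)
  have hnt : |n * t| ≤ 1 / 12 := by
    calc |n * t| = n * |t| := by rw [abs_mul, Nat.abs_cast]
      _ ≤ n * (1 / (12 * n)) := by gcongr
      _ = 1 / 12 := by field_simp
  obtain ⟨hlow, hupp⟩ := abs_le.1 hnt
  constructor
  · refine (pos_of_mul_pos_right ?_ hn₀.le).le
    linarith [h.half_lt, mul_add (n : ℝ) x₀ t]
  · rw [le_div_iff₀' hn₀]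
    linarith [h.lt_eleven_twelfths, mul_add (n : ℝ) x₀ t]

-- By maximality `sineProd n (x₀ - t) ≤ sineProd n x₀`, so a lower bound for the symmetric product
-- `sineProd n (x₀ + t) * sineProd n (x₀ - t)` is one for `sineProd n (x₀ + t)`.
lemma mul_one_sub_le_sineProd_add (h : IsPeak n x₀) (hn : 800 ≤ n) {t : ℝ}
    (ht : |t| ≤ 1 / (12 * n)) (ht' : 48 * n ^ 3 * t ^ 2 ≤ 1) :
    sineProd n x₀ * (1 - 48 * n ^ 3 * t ^ 2) ≤ sineProd n (x₀ + t) := by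
  have : (0 : ℝ) < n := by positivity
  have hp := h.sineProd_pos
  have hsum := h.sum_sin_sq_div_sin_sq_le hn t
  have hratio : ∀ k ∈ Finset.range n,
      0 ≤ sin (π * ((k + 1) * t)) ^ 2 / sin (π * ((k + 1) * x₀)) ^ 2 := fun k _ => by positivity
  have hprod := one_sub_sum_le_prod_one_sub hratio fun k hk =>
    (Finset.single_le_sum hratio hk).trans (hsum.trans ht')
  have hright := sineProd_nonneg (h.add_mem_Icc ht).1 (h.add_mem_Icc ht).2
  have hleft : sineProd n (x₀ - t) ≤ sineProd n x₀ :=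
    h.isMaxOn (h.add_mem_Icc ((abs_neg t).trans_le ht))
  refine le_of_mul_le_mul_right ?_ hp
  calc sineProd n x₀ * (1 - 48 * n ^ 3 * t ^ 2) * sineProd n x₀
      = sineProd n x₀ ^ 2 * (1 - 48 * n ^ 3 * t ^ 2) := by ring
    _ ≤ sineProd n x₀ ^ 2 * _ := by gcongr; exact (sub_le_sub_left hsum 1).trans hprod
    _ = sineProd n (x₀ + t) * sineProd n (x₀ - t) :=
        (sineProd_add_mul_sineProd_sub t h.pos h.mul_lt_one).symm
    _ ≤ sineProd n (x₀ + t) * sineProd n x₀ := by gcongr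

lemma integral_sineProd_add_le {d : ℝ} (h : IsPeak n x₀) (hd₀ : 0 ≤ d) (hd : d ≤ 1 / (12 * n)) :
    ∫ t in (-d)..d, sineProd n (x₀ + t) ≤ ∫ x in (0 : ℝ)..1 / n, sineProd n x := by
  have hright := (h.add_mem_Icc ((abs_of_nonneg hd₀).trans_le hd)).2
  have hleft := (h.add_mem_Icc ((abs_neg d).trans_le ((abs_of_nonneg hd₀).trans_le hd))).1
  rw [intervalIntegral.integral_comp_add_left, ← sub_eq_add_neg]
  refine intervalIntegral.integral_mono_interval hleft (by linarith) hright ?_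
    ((contDiff_sineProd n).continuous.intervalIntegrable _ _)
  filter_upwards [ae_restrict_mem measurableSet_Ioc] with x hx
  exact sineProd_nonneg hx.1.le hx.2

lemma le_integral_sineProd (h : IsPeak n x₀) (hn : 800 ≤ n) :
    4.9 / n ^ 2 * sineProd n x₀ ≤ ∫ x in (0 : ℝ)..1 / n, sineProd n x := by
  have hn' : (800 : ℝ) ≤ n := by exact_mod_cast hn
  have : (0 : ℝ) < n := by linarith
  have hcont := (contDiff_sineProd n).continuous
  set d : ℝ := 3 / n ^ 2 with hd
  have hd₀ : 0 < d := by positivity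
  have hd_le : d ≤ 1 / (12 * n) := by
    rw [hd, div_le_div_iff₀ (by positivity) (by positivity)]
    nlinarith
  have hd_sq : (n : ℝ) ^ 3 * d ^ 2 ≤ 9 / 800 := by
    rw [hd, show (n : ℝ) ^ 3 * (3 / n ^ 2) ^ 2 = 9 / n by field_simp; norm_num]
    gcongr
  calc 4.9 / n ^ 2 * sineProd n x₀
      = sineProd n x₀ * (4.9 / 3 * d) := by rw [hd]; ring
    _ ≤ sineProd n x₀ * (2 * d - 2 / 3 * (48 * n ^ 3) * d ^ 3) := by
        have := h.sineProd_pos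
        gcongr
        linarith [mul_le_mul_of_nonneg_right hd_sq hd₀.le]
    _ = ∫ t in (-d)..d, sineProd n x₀ * (1 - 48 * n ^ 3 * t ^ 2) := by
        rw [intervalIntegral.integral_const_mul, integral_one_sub_mul_sq]
    _ ≤ ∫ t in (-d)..d, sineProd n (x₀ + t) := by
        refine intervalIntegral.integral_mono_on (by linarith)
          (Continuous.intervalIntegrable (by fun_prop) _ _)
          (Continuous.intervalIntegrable (by fun_prop) _ _) fun t ht => ?_
        have ht_sq : t ^ 2 ≤ d ^ 2 := sq_le_sq' ht.1 ht.2
        refine h.mul_one_sub_le_sineProd_add hn ((abs_le.2 ht).trans hd_le) ?_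
        linarith [mul_le_mul_of_nonneg_left ht_sq (by positivity : (0 : ℝ) ≤ n ^ 3)]
    _ ≤ ∫ x in (0 : ℝ)..1 / n, sineProd n x := h.integral_sineProd_add_le hd₀.le hd_le

end IsPeak

section UnimodalOscillation

variable {f : ℝ → ℝ} {a b c m : ℝ}

lemma abs_integral_deriv_mul_le_of_monotoneOn {v : ℝ → ℝ} {C : ℝ} (hf : ContDiff ℝ 1 f)
    (hab : a < b) (hmono : MonotoneOn f (Icc a b)) (hv : ∀ x, |v x| ≤ C) :
    |∫ x in a..b, deriv f x * v x| ≤ C * (f b - f a) := by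
  have hf' : IntervalIntegrable (deriv f) volume a b :=
    (hf.continuous_deriv le_rfl).intervalIntegrable _ _
  have hdiff : Differentiable ℝ f := hf.differentiable one_ne_zero
  have hbound := intervalIntegral.norm_integral_le_of_norm_le (μ := volume)
    (f := fun x => deriv f x * v x) (g := fun x => C * deriv f x) hab.le
    (.of_forall fun x hx => ?_) (hf'.const_mul C)
  · rwa [intervalIntegral.integral_const_mul,
      intervalIntegral.integral_deriv_eq_sub (fun x _ => hdiff x) hf'] at hbound
  · have hderiv : 0 ≤ deriv f x := by
      rw [← (hdiff x).derivWithin (uniqueDiffOn_Icc hab x (Ioc_subset_Icc_self hx))]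
      exact hmono.derivWithin_nonneg
    rw [norm_eq_abs, abs_mul, abs_of_nonneg hderiv, mul_comm]
    gcongr
    exact hv x

lemma abs_integral_deriv_mul_le_of_antitoneOn {v : ℝ → ℝ} {C : ℝ} (hf : ContDiff ℝ 1 f)
    (hab : a < b) (hanti : AntitoneOn f (Icc a b)) (hv : ∀ x, |v x| ≤ C) :
    |∫ x in a..b, deriv f x * v x| ≤ C * (f a - f b) := by
  have := abs_integral_deriv_mul_le_of_monotoneOn hf.neg hab hanti.neg hv
  simp only [deriv.fun_neg', neg_mul, intervalIntegral.integral_neg, abs_neg] at this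
  rwa [neg_sub_neg] at this

lemma abs_integral_mul_cos_le_of_unimodal (hf : ContDiff ℝ 1 f) (hac : a < c) (hcb : c < b)
    (hmono : MonotoneOn f (Icc a c)) (hanti : AntitoneOn f (Icc c b)) (ha : f a = 0)
    (hb : f b = 0) (hm : 0 < m) : |∫ x in a..b, f x * cos (m * x)| ≤ 2 * f c / m := by
  have hf' : Continuous (deriv f) := hf.continuous_deriv le_rfl
  have hv : ∀ x, |sin (m * x) / m| ≤ 1 / m := fun x => by
    rw [abs_div, abs_of_pos hm]
    gcongr
    exact abs_sin_le_one _
  have hcos : ∀ x, HasDerivAt (fun x => sin (m * x) / m) (cos (m * x)) x := fun x => by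
    have := (((hasDerivAt_id' x).const_mul m).sin).div_const m
    rwa [mul_one, mul_div_cancel_right₀ _ hm.ne'] at this
  have hparts := intervalIntegral.integral_mul_deriv_eq_deriv_mul (a := a) (b := b)
    (fun x _ => (hf.differentiable one_ne_zero x).hasDerivAt) (fun x _ => hcos x)
    (hf'.intervalIntegrable _ _) (Continuous.intervalIntegrable (by fun_prop) _ _)
  have hint : Continuous fun x => deriv f x * (sin (m * x) / m) := by fun_prop
  have hleft := abs_integral_deriv_mul_le_of_monotoneOn hf hac hmono hv
  have hright := abs_integral_deriv_mul_le_of_antitoneOn hf hcb hanti hv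
  rw [ha, sub_zero] at hleft
  rw [hb, sub_zero] at hright
  rw [hparts, ha, hb, zero_mul, zero_mul, sub_zero, zero_sub, abs_neg,
    ← intervalIntegral.integral_add_adjacent_intervals (hint.intervalIntegrable a c)
      (hint.intervalIntegrable c b)]
  refine (abs_add_le _ _).trans ((add_le_add hleft hright).trans_eq ?_)
  ring

end UnimodalOscillation

lemma IsPeak.abs_integral_sineProd_mul_cos_le {n : ℕ} {x₀ m : ℝ} (h : IsPeak n x₀) (hm : 0 < m) :
    |∫ x in (0 : ℝ)..1 / n, sineProd n x * cos (m * x)| ≤ 2 * sineProd n x₀ / m :=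
  abs_integral_mul_cos_le_of_unimodal (contDiff_sineProd n) h.pos h.lt_one_div h.monotoneOn
    h.antitoneOn (sineProd_zero_right h.ne_zero) (sineProd_one_div h.ne_zero) hm

section FirstArc

lemma mul_sub_le_integral_of_le_on_Icc {f : ℝ → ℝ} {a b c d δ : ℝ} (hf : Continuous f)
    (hac : a ≤ c) (hcd : c ≤ d) (hdb : d ≤ b) (hf₀ : ∀ x ∈ Icc a b, 0 ≤ f x)
    (hδ : ∀ x ∈ Icc c d, δ ≤ f x) : δ * (d - c) ≤ ∫ x in a..b, f x := by
  calc δ * (d - c) = ∫ _ in c..d, δ := by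
        rw [intervalIntegral.integral_const, smul_eq_mul, mul_comm]
    _ ≤ ∫ x in c..d, f x := intervalIntegral.integral_mono_on hcd (by simp)
        (hf.intervalIntegrable _ _) hδ
    _ ≤ ∫ x in a..b, f x := by
        refine intervalIntegral.integral_mono_interval hac hcd hdb ?_ (hf.intervalIntegrable _ _)
        filter_upwards [ae_restrict_mem measurableSet_Ioc] with x hx
        exact hf₀ x (Ioc_subset_Icc_self hx)

lemma mul_exp_le_exp {n : ℕ} (hn : 800 ≤ n) :
    20 * (n + 1 / 2) ^ 3 * (n * exp (0.117 * n + 24)) ≤ exp (0.189 * (n + 1 / 2)) := by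
  have hn' : (800 : ℝ) ≤ n := by exact_mod_cast hn
  have htangent : (n : ℝ) ≤ 800 * exp (n / 800 - 1) := by
    linarith [add_one_le_exp ((n : ℝ) / 800 - 1)]
  have hpow : (n : ℝ) ^ 4 ≤ 800 ^ 4 * exp (n / 200 - 4) := by
    calc (n : ℝ) ^ 4 ≤ (800 * exp (n / 800 - 1)) ^ 4 := by gcongr
      _ = 800 ^ 4 * exp (n / 200 - 4) := by
        rw [mul_pow, ← exp_nat_mul]; congr 2; push_cast; ring
  have hexp : 20.1 * (800 : ℝ) ^ 4 ≤ exp 32 := by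
    calc 20.1 * (800 : ℝ) ^ 4 ≤ 2.7 ^ 32 := by norm_num
      _ ≤ exp 1 ^ 32 := by gcongr; linarith [exp_one_gt_d9]
      _ = exp 32 := by rw [← exp_nat_mul]; norm_num
  calc 20 * ((n : ℝ) + 1 / 2) ^ 3 * (n * exp (0.117 * n + 24))
      ≤ 20 * (801 / 800 * n) ^ 3 * (n * exp (0.117 * n + 24)) := by gcongr; linarith
    _ = 20 * (801 / 800) ^ 3 * n ^ 4 * exp (0.117 * n + 24) := by ring
    _ ≤ 20.1 * (800 ^ 4 * exp (n / 200 - 4)) * exp (0.117 * n + 24) := by gcongr; norm_num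
    _ = 20.1 * 800 ^ 4 * exp (n / 200 - 4) * exp (0.117 * n + 24) := by ring
    _ ≤ exp 32 * exp (n / 200 - 4) * exp (0.117 * n + 24) := by gcongr
    _ = exp (32 + (n / 200 - 4) + (0.117 * n + 24)) := by rw [exp_add (32 + _), exp_add 32]
    _ ≤ exp (0.189 * (n + 1 / 2)) := exp_le_exp.2 (by linarith)

lemma le_integral_sineProd_mul {n : ℕ} (hn : 800 ≤ n) {g : ℝ → ℝ} {δ : ℝ} (hg : Continuous g)
    (hδ : 0 ≤ δ) (hg₀ : ∀ x ∈ Icc (0 : ℝ) (1 / n), 0 ≤ g x)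
    (hgδ : ∀ x : ℝ, 3 / 4 ≤ (n + 1 / 2) * x → (n + 1 / 2) * x ≤ 5 / 6 → δ ≤ g x) :
    5 / 3 * (n + 1 / 2) ^ 2 * δ * (n * exp (0.117 * n + 24)) ≤
      ∫ x in (0 : ℝ)..1 / n, sineProd n x * g x := by
  have hcont := (contDiff_sineProd n).continuous
  set p : ℝ := n + 1 / 2 with hp
  have hn₀ : (0 : ℝ) < n := by positivity
  have hwindow : 5 / 6 / p ≤ 1 / n := div_le_div₀ zero_le_one (by norm_num) hn₀ (by linarith)
  have hle : 3 / 4 / p ≤ 5 / 6 / p := div_le_div_of_nonneg_right (by norm_num) (by positivity)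
  calc 5 / 3 * p ^ 2 * δ * (n * exp (0.117 * n + 24))
      = 20 * p ^ 3 * (n * exp (0.117 * n + 24)) * δ * (5 / 6 / p - 3 / 4 / p) := by
        field_simp; ring
    _ ≤ exp (0.189 * p) * δ * (5 / 6 / p - 3 / 4 / p) := by
        have := sub_nonneg.2 hle
        gcongr
        exact mul_exp_le_exp hn
    _ ≤ ∫ x in (0 : ℝ)..1 / n, sineProd n x * g x := by
        refine mul_sub_le_integral_of_le_on_Icc (by fun_prop) (by positivity) hle hwindow
          (fun x hx => mul_nonneg (sineProd_nonneg hx.1 hx.2) (hg₀ x hx)) fun x hx => ?_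
        have h₁ := (div_le_iff₀' (by positivity)).1 hx.1
        have h₂ := (le_div_iff₀' (by positivity)).1 hx.2
        have hexp := exp_le_sineProd (by omega) h₁ h₂
        exact mul_le_mul hexp (hgδ x h₁ h₂) hδ ((exp_pos _).le.trans hexp)

end FirstArc

section Frequencies

variable {n e m : ℕ} {x σ : ℝ}

lemma abs_sin_nat_mul_le (k : ℕ) (t : ℝ) : |sin (k * t)| ≤ k * |sin t| := by
  induction k with
  | zero => simp
  | succ k ih =>
    calc |sin ((k + 1 : ℕ) * t)| = |sin (k * t) * cos t + cos (k * t) * sin t| := by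
          rw [← sin_add]; push_cast; ring_nf
      _ ≤ |sin (k * t)| * |cos t| + |cos (k * t)| * |sin t| := by
          rw [← abs_mul, ← abs_mul]; exact abs_add_le _ _
      _ ≤ k * |sin t| * 1 + 1 * |sin t| := by
          gcongr
          exacts [abs_cos_le_one t, abs_cos_le_one _]
      _ = (k + 1 : ℕ) * |sin t| := by push_cast; ring

lemma one_sub_cos_nat_mul_le (k : ℕ) (t : ℝ) : 1 - cos (k * t) ≤ k ^ 2 * (1 - cos t) := by
  have hhalf (s : ℝ) : 1 - cos s = 2 * |sin (s / 2)| ^ 2 := by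
    rw [sq_abs, sin_sq_eq_half_sub, mul_div_cancel₀ s two_ne_zero]; ring
  calc 1 - cos (k * t) = 2 * |sin (k * (t / 2))| ^ 2 := by rw [hhalf, mul_div_assoc]
    _ ≤ 2 * (k * |sin (t / 2)|) ^ 2 := by gcongr; exact abs_sin_nat_mul_le k _
    _ = k ^ 2 * (1 - cos t) := by rw [hhalf]; ring

lemma one_sub_mul_cos_odd_mul_le {k : ℕ} (hk : Odd k) (hσ : σ = 1 ∨ σ = -1) (t : ℝ) :
    1 - σ * cos (k * t) ≤ k ^ 2 * (1 - σ * cos t) := by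
  obtain ⟨j, rfl⟩ := hk
  rcases hσ with rfl | rfl
  · simpa using one_sub_cos_nat_mul_le (2 * j + 1) t
  · have hshift : ((2 * j + 1 : ℕ) : ℝ) * (t + π) = (2 * j + 1 : ℕ) * t + π + j * (2 * π) := by
      push_cast; ring
    have h := one_sub_cos_nat_mul_le (2 * j + 1) (t + π)
    rw [hshift, cos_add_nat_mul_two_pi, cos_add_pi, cos_add_pi] at h
    linarith

lemma eight_mul_sq_le_cos_sub_cos (hme : m + e ≤ n) (hem : e + 2 ≤ m) (hx₀ : 0 ≤ x)
    (hx₁ : n * x ≤ 1) : 8 * x ^ 2 ≤ cos (π * e * x) - cos (π * m * x) := by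
  have hme' : (m : ℝ) + e ≤ n := by exact_mod_cast hme
  have hem' : (e : ℝ) + 2 ≤ m := by exact_mod_cast hem
  have hsin {c : ℝ} (hc : 2 ≤ c) (hcn : c ≤ n) : 2 * x ≤ sin (π * (c * x / 2)) := by
    have hcx : c * x ≤ n * x := by gcongr
    calc 2 * x ≤ 2 * (c * x / 2) := by nlinarith
      _ ≤ sin (π * (c * x / 2)) := two_mul_le_sin_pi_mul (by positivity) (by linarith)
  have : (0 : ℝ) ≤ e := e.cast_nonneg
  calc 8 * x ^ 2 = 2 * (2 * x) * (2 * x) := by ring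
    _ ≤ 2 * sin (π * ((m + e) * x / 2)) * sin (π * ((m - e) * x / 2)) := by
        have hadd := hsin (by linarith) hme'
        have hsub := hsin (c := m - e) (by linarith) (by linarith)
        gcongr
        linarith
    _ = cos (π * e * x) - cos (π * m * x) := by
        rw [cos_sub_cos, ← neg_sub (π * m * x), neg_div, sin_neg]
        ring_nf

lemma two_mul_one_sub_sq_le_cos_add_cos (hme : m + e ≤ n) (hem : e ≤ m) (hx₀ : 0 ≤ x)
    (hx₁ : n * x ≤ 1) : 2 * (1 - n * x) ^ 2 ≤ cos (π * e * x) + cos (π * m * x) := by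
  have hme' : (m : ℝ) + e ≤ n := by exact_mod_cast hme
  have hem' : (e : ℝ) ≤ m := by exact_mod_cast hem
  have hcos {c : ℝ} (hc : 0 ≤ c) (hcn : c ≤ n) : 1 - n * x ≤ cos (π * (c * x / 2)) := by
    have hcx : c * x ≤ n * x := by gcongr
    have h := two_mul_le_sin_pi_mul (t := 1 / 2 - c * x / 2) (by linarith)
      (by have := mul_nonneg hc hx₀; linarith)
    rw [mul_sub π, mul_one_div, sin_pi_div_two_sub] at h
    linarith
  have : (0 : ℝ) ≤ e := e.cast_nonneg
  calc 2 * (1 - n * x) ^ 2 = 2 * (1 - n * x) * (1 - n * x) := by ring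
    _ ≤ 2 * cos (π * ((m + e) * x / 2)) * cos (π * ((m - e) * x / 2)) := by
        have hadd := hcos (by linarith) hme'
        have hsub := hcos (c := m - e) (by linarith) (by linarith)
        gcongr
        linarith
    _ = cos (π * e * x) + cos (π * m * x) := by
        rw [add_comm (cos _), cos_add_cos]
        ring_nf

lemma min_le_cos_sub_mul_cos (hme : m + e ≤ n) (hσ : σ = 1 ∧ e + 2 ≤ m ∨ σ = -1 ∧ e ≤ m)
    (hx₀ : 0 ≤ x) (hx₁ : n * x ≤ 1) :
    min (8 * x ^ 2) (2 * (1 - n * x) ^ 2) ≤ cos (π * e * x) - σ * cos (π * m * x) := by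
  rcases hσ with ⟨rfl, hem⟩ | ⟨rfl, hem⟩
  · rw [one_mul]
    exact min_le_of_left_le (eight_mul_sq_le_cos_sub_cos hme hem hx₀ hx₁)
  · rw [neg_one_mul, sub_neg_eq_add]
    exact min_le_of_right_le (two_mul_one_sub_sq_le_cos_add_cos hme hem hx₀ hx₁)

lemma le_integral_sineProd_mul_cos_sub_of_add_le (hn : 800 ≤ n) (hme : m + e ≤ n)
    (hσ : σ = 1 ∧ e + 2 ≤ m ∨ σ = -1 ∧ e ≤ m) :
    n * exp (0.117 * n + 24) ≤ ∫ x in (0 : ℝ)..1 / n,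
      sineProd n x * (cos (π * e * x) - σ * cos (π * m * x)) := by
  have hn' : (800 : ℝ) ≤ n := by exact_mod_cast hn
  calc n * exp (0.117 * n + 24)
      ≤ 5 / 3 * (n + 1 / 2) ^ 2 * (4.5 / (n + 1 / 2) ^ 2) * (n * exp (0.117 * n + 24)) := by
        rw [mul_assoc (5 / 3), mul_div_cancel₀ _ (by positivity)]
        exact le_mul_of_one_le_left (by positivity) (by norm_num)
    _ ≤ _ := by
        refine le_integral_sineProd_mul hn (by fun_prop) (by positivity) (fun x hx => ?_)
          fun x h₁ h₂ => ?_
        · exact (le_min (by positivity) (by positivity)).trans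
            (min_le_cos_sub_mul_cos hme hσ hx.1 ((le_div_iff₀' (by positivity)).1 hx.2))
        · have hx : 0 < x :=
            pos_of_mul_pos_right (by linarith) (by positivity : (0 : ℝ) ≤ n + 1 / 2)
          refine le_trans ?_ (min_le_cos_sub_mul_cos hme hσ hx.le (by linarith))
          rw [le_min_iff, div_le_iff₀ (by positivity), div_le_iff₀ (by positivity)]
          constructor
          · calc (4.5 : ℝ) = 8 * (3 / 4) ^ 2 := by norm_num
              _ ≤ 8 * ((n + 1 / 2) * x) ^ 2 := by gcongr
              _ = 8 * x ^ 2 * (n + 1 / 2) ^ 2 := by ring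
          · calc (4.5 : ℝ) ≤ 2 * (1 / 6) ^ 2 * 800 ^ 2 := by norm_num
              _ ≤ 2 * (1 - n * x) ^ 2 * (n + 1 / 2) ^ 2 := by gcongr <;> linarith

lemma IsPeak.half_integral_le {x₀ c : ℝ} (h : IsPeak n x₀) (hn : 800 ≤ n) (hσ : |σ| ≤ 1)
    (hc : 0.9 * n ^ 2 ≤ c) :
    (∫ x in (0 : ℝ)..1 / n, sineProd n x) / 2 ≤
      ∫ x in (0 : ℝ)..1 / n, sineProd n x * (1 - σ * cos (c * x)) := by
  have hcont := (contDiff_sineProd n).continuous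
  have : (0 : ℝ) < n := by positivity
  have hc₀ : 0 < c := lt_of_lt_of_le (by positivity) hc
  have hsplit : ∫ x in (0 : ℝ)..1 / n, sineProd n x * (1 - σ * cos (c * x)) =
      (∫ x in (0 : ℝ)..1 / n, sineProd n x) -
        σ * ∫ x in (0 : ℝ)..1 / n, sineProd n x * cos (c * x) := by
    rw [← intervalIntegral.integral_const_mul, ← intervalIntegral.integral_sub
      (hcont.intervalIntegrable _ _) (Continuous.intervalIntegrable (by fun_prop) _ _)]
    congr! 2
    ring
  have hosc : |σ * ∫ x in (0 : ℝ)..1 / n, sineProd n x * cos (c * x)| ≤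
      (∫ x in (0 : ℝ)..1 / n, sineProd n x) / 2 := by
    calc |σ * ∫ x in (0 : ℝ)..1 / n, sineProd n x * cos (c * x)|
        ≤ 1 * (2 * sineProd n x₀ / c) := by
          rw [abs_mul]; gcongr; exact h.abs_integral_sineProd_mul_cos_le hc₀
      _ ≤ 1 * (2 * sineProd n x₀ / (0.9 * n ^ 2)) := by
          have := h.sineProd_pos
          gcongr
      _ ≤ 4.9 / n ^ 2 * sineProd n x₀ / 2 := by
          have := h.sineProd_pos
          rw [one_mul, ← sub_nonneg]
          have : 4.9 / n ^ 2 * sineProd n x₀ / 2 - 2 * sineProd n x₀ / (0.9 * n ^ 2) =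
            (4.9 / 2 - 2 / 0.9) * (sineProd n x₀ / n ^ 2) := by field_simp
          rw [this]
          have : 0 < sineProd n x₀ / n ^ 2 := by positivity
          nlinarith
      _ ≤ (∫ x in (0 : ℝ)..1 / n, sineProd n x) / 2 := by
          gcongr; exact h.le_integral_sineProd hn
  rw [hsplit]
  linarith [(abs_le.1 hosc).2]

lemma integral_sineProd_mul_one_sub_cos_odd_mul_le {k : ℕ} (hk : Odd k) (hσ : σ = 1 ∨ σ = -1)
    (n : ℕ) (c : ℝ) :
    ∫ x in (0 : ℝ)..1 / n, sineProd n x * (1 - σ * cos (k * c * x)) ≤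
      k ^ 2 * ∫ x in (0 : ℝ)..1 / n, sineProd n x * (1 - σ * cos (c * x)) := by
  have hcont := (contDiff_sineProd n).continuous
  rw [← intervalIntegral.integral_const_mul]
  refine intervalIntegral.integral_mono_on (by positivity)
    (Continuous.intervalIntegrable (by fun_prop) _ _)
    (Continuous.intervalIntegrable (by fun_prop) _ _) fun x hx => ?_
  rw [mul_assoc, mul_left_comm (_ ^ 2)]
  exact mul_le_mul_of_nonneg_left (one_sub_mul_cos_odd_mul_le hk hσ (c * x))
    (sineProd_nonneg hx.1 hx.2)

lemma integral_sineProd_mul_one_sub_cos_nonneg (hσ : |σ| ≤ 1) (n : ℕ) (c : ℝ) :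
    0 ≤ ∫ x in (0 : ℝ)..1 / n, sineProd n x * (1 - σ * cos (c * x)) := by
  refine intervalIntegral.integral_nonneg (by positivity) fun x hx =>
    mul_nonneg (sineProd_nonneg hx.1 hx.2) (sub_nonneg.2 (le_of_abs_le ?_))
  rw [abs_mul]
  exact mul_le_one₀ hσ (abs_nonneg _) (abs_cos_le_one _)

-- The oscillation bound alone would require `m` to be a large multiple of `n`; it is applied to an
-- odd multiple `k * m` of the frequency with `k ≈ 0.3 * n`, at the cost of a factor `k ^ 2`.
lemma mul_integral_sineProd_le (hn : 800 ≤ n) (hnm : n ≤ m) (hσ : σ = 1 ∨ σ = -1) :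
    50 / 9 * (∫ x in (0 : ℝ)..1 / n, sineProd n x) ≤
      n ^ 2 * ∫ x in (0 : ℝ)..1 / n, sineProd n x * (1 - σ * cos (π * m * x)) := by
  have hn' : (800 : ℝ) ≤ n := by exact_mod_cast hn
  have hnm' : (n : ℝ) ≤ m := by exact_mod_cast hnm
  obtain ⟨x₀, hpeak⟩ := exists_isPeak hn
  obtain ⟨k, hk_odd, hk₁, hk₂⟩ : ∃ k, Odd k ∧ 10 * k ≤ 3 * n ∧ 3 * n ≤ 10 * k + 20 :=
    ⟨2 * ((3 * n - 10) / 20) + 1, ⟨_, rfl⟩, by omega, by omega⟩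
  have hk₁' : 10 * (k : ℝ) ≤ 3 * n := by exact_mod_cast hk₁
  have hk₂' : 3 * (n : ℝ) ≤ 10 * k + 20 := by exact_mod_cast hk₂
  have hσ_abs : |σ| ≤ 1 := by rcases hσ with rfl | rfl <;> simp
  have hfreq : 0.9 * (n : ℝ) ^ 2 ≤ k * (π * m) := by
    calc 0.9 * (n : ℝ) ^ 2 ≤ 0.2975 * n * (3.1 * n) := by nlinarith
      _ ≤ k * (π * m) := by
        gcongr
        · linarith
        · linarith [pi_gt_d2]
  have hk_sq : (k : ℝ) ^ 2 ≤ (3 / 10 * n) ^ 2 := by gcongr; linarith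
  have hhalf := (hpeak.half_integral_le hn hσ_abs hfreq).trans
    (integral_sineProd_mul_one_sub_cos_odd_mul_le hk_odd hσ n (π * m))
  linarith [mul_le_mul_of_nonneg_right hk_sq
    (integral_sineProd_mul_one_sub_cos_nonneg hσ_abs n (π * m))]

lemma one_sub_div_sq_le_cos (he : e ≤ 1) (hx : x ∈ Icc 0 (1 / n : ℝ)) :
    1 - 223 / 45 / n ^ 2 ≤ cos (π * e * x) := by
  have he' : (e : ℝ) ≤ 1 := by exact_mod_cast he
  have hpi : π ≤ 3.1416 := pi_lt_d4.le
  have hconst : (3.1416 : ℝ) ^ 2 / 2 ≤ 223 / 45 := by norm_num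
  have := hx.1
  calc 1 - 223 / 45 / (n : ℝ) ^ 2 ≤ 1 - (3.1416 * 1 * (1 / n)) ^ 2 / 2 := by
        rw [mul_one, mul_one_div, div_pow, div_right_comm ((3.1416 : ℝ) ^ 2)]
        exact sub_le_sub_left (div_le_div_of_nonneg_right hconst (sq_nonneg (n : ℝ))) 1
    _ ≤ 1 - (π * e * x) ^ 2 / 2 := by gcongr; exact hx.2
    _ ≤ cos (π * e * x) := one_sub_sq_div_two_le_cos

lemma le_integral_sineProd_mul_cos_sub_of_le (hn : 800 ≤ n) (he : e ≤ 1) (hnm : n ≤ m)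
    (hσ : σ = 1 ∨ σ = -1) :
    n * exp (0.117 * n + 24) ≤ ∫ x in (0 : ℝ)..1 / n,
      sineProd n x * (cos (π * e * x) - σ * cos (π * m * x)) := by
  have hcont := (contDiff_sineProd n).continuous
  have : (0 : ℝ) < n := by positivity
  have hmass := le_integral_sineProd_mul hn continuous_const zero_le_one
    (fun _ _ => zero_le_one) fun _ _ _ => le_rfl
  simp only [mul_one] at hmass
  calc n * exp (0.117 * n + 24)
      ≤ 3 / 5 / n ^ 2 * (5 / 3 * (n + 1 / 2) ^ 2 * (n * exp (0.117 * n + 24))) := by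
        have hone : 3 / 5 / (n : ℝ) ^ 2 * (5 / 3 * n ^ 2) = 1 := by field_simp
        calc n * exp (0.117 * n + 24)
            = 3 / 5 / n ^ 2 * (5 / 3 * n ^ 2 * (n * exp (0.117 * n + 24))) := by
              rw [← mul_assoc, hone, one_mul]
          _ ≤ _ := by gcongr; linarith
    _ ≤ 3 / 5 / n ^ 2 * ∫ x in (0 : ℝ)..1 / n, sineProd n x := by gcongr
    _ = 1 / n ^ 2 * (50 / 9 * ∫ x in (0 : ℝ)..1 / n, sineProd n x) -
        223 / 45 / n ^ 2 * ∫ x in (0 : ℝ)..1 / n, sineProd n x := by ring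
    _ ≤ (1 / n ^ 2 * (n ^ 2 * ∫ x in (0 : ℝ)..1 / n, sineProd n x * (1 - σ * cos (π * m * x))))
        - 223 / 45 / n ^ 2 * ∫ x in (0 : ℝ)..1 / n, sineProd n x := by
        have := mul_integral_sineProd_le hn hnm hσ
        gcongr ?_ * ?_ - _
    _ = ∫ x in (0 : ℝ)..1 / n, (sineProd n x * (1 - σ * cos (π * m * x)) -
        223 / 45 / n ^ 2 * sineProd n x) := by
        rw [intervalIntegral.integral_sub (Continuous.intervalIntegrable (by fun_prop) _ _)
          (Continuous.intervalIntegrable (by fun_prop) _ _), intervalIntegral.integral_const_mul,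
          ← mul_assoc, one_div_mul_cancel (by positivity), one_mul]
    _ ≤ _ := by
        refine intervalIntegral.integral_mono_on (by positivity)
          (Continuous.intervalIntegrable (by fun_prop) _ _)
          (Continuous.intervalIntegrable (by fun_prop) _ _) fun x hx => ?_
        have := mul_le_mul_of_nonneg_left (one_sub_div_sq_le_cos he hx) (sineProd_nonneg hx.1 hx.2)
        linarith

lemma integral_sineProd_mul_cos_sub_nonneg (hn : 800 ≤ n) (he : e ≤ 1)
    (hσ : σ = 1 ∧ e + 2 ≤ m ∨ σ = -1 ∧ e ≤ m) :
    0 ≤ ∫ x in (0 : ℝ)..1 / 2, sineProd n x * (cos (π * e * x) - σ * cos (π * m * x)) := by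
  have hσ_or : σ = 1 ∨ σ = -1 := hσ.imp And.left And.left
  have hn' : (800 : ℝ) ≤ n := by exact_mod_cast hn
  have hcont := (contDiff_sineProd n).continuous
  have hint (u v : ℝ) : IntervalIntegrable
      (fun x => sineProd n x * (cos (π * e * x) - σ * cos (π * m * x))) volume u v :=
    Continuous.intervalIntegrable (by fun_prop) u v
  have hfirst : n * exp (0.117 * n + 24) ≤ ∫ x in (0 : ℝ)..1 / n,
      sineProd n x * (cos (π * e * x) - σ * cos (π * m * x)) := by
    rcases lt_or_ge m n with hmn | hnm
    · exact le_integral_sineProd_mul_cos_sub_of_add_le hn (by omega) hσ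
    · exact le_integral_sineProd_mul_cos_sub_of_le hn he hnm hσ_or
  have hle : 1 / (n : ℝ) ≤ 1 / 2 := by gcongr; linarith
  have htail : |∫ x in 1 / (n : ℝ)..1 / 2,
      sineProd n x * (cos (π * e * x) - σ * cos (π * m * x))| ≤
      n * exp (0.117 * n + 24) * 2 * |1 / 2 - 1 / (n : ℝ)| := by
    refine intervalIntegral.norm_integral_le_of_norm_le_const (E := ℝ) fun x hx => ?_
    rw [uIoc_of_le hle] at hx
    have he_cos := abs_le.1 (abs_cos_le_one (π * e * x))
    have hm_cos := abs_le.1 (abs_cos_le_one (π * m * x))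
    rw [norm_mul]
    refine mul_le_mul (abs_sineProd_le hn hx.1.le hx.2) (abs_le.2 ?_) (norm_nonneg _)
      (by positivity)
    rcases hσ_or with rfl | rfl <;> constructor <;>
      linarith [he_cos.1, he_cos.2, hm_cos.1, hm_cos.2]
  rw [abs_of_nonneg (sub_nonneg.2 hle)] at htail
  have : 0 ≤ n * exp (0.117 * n + 24) * (1 / n) := by positivity
  rw [← intervalIntegral.integral_add_adjacent_intervals (hint 0 (1 / n)) (hint (1 / n) (1 / 2))]
  linarith [(abs_le.1 htail).1]

end Frequencies

section Fourier

lemma integral_exp_two_pi_I_mul (m : ℤ) :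
    ∫ x in (0 : ℝ)..1, Complex.exp (2 * π * Complex.I * m * x) = if m = 0 then 1 else 0 := by
  split_ifs with hm
  · simp [hm]
  · have hne : 2 * π * Complex.I * m ≠ 0 := by simp [hm, pi_ne_zero]
    have hperiod : Complex.exp (2 * π * Complex.I * m * (1 : ℝ)) = 1 :=
      Complex.exp_eq_one_iff.2 ⟨m, by push_cast; ring⟩
    rw [integral_exp_mul_complex hne, hperiod]
    simp

lemma coeff_eq_integral (p : ℤ[X]) (j : ℕ) :
    (p.coeff j : ℂ) = ∫ x in (0 : ℝ)..1, aeval (Complex.exp (2 * π * Complex.I * x)) p *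
      Complex.exp (-(2 * π * Complex.I * j * x)) := by
  have hexpand (x : ℝ) : aeval (Complex.exp (2 * π * Complex.I * x)) p *
      Complex.exp (-(2 * π * Complex.I * j * x)) = ∑ i ∈ Finset.range (p.natDegree + j + 1),
        p.coeff i * Complex.exp (2 * π * Complex.I * (i - j : ℤ) * x) := by
    rw [aeval_eq_sum_range' (n := p.natDegree + j + 1) (by omega), Finset.sum_mul]
    refine Finset.sum_congr rfl fun i _ => ?_
    rw [zsmul_eq_mul, mul_assoc, ← Complex.exp_nat_mul, ← Complex.exp_add]
    congr 2
    push_cast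
    ring
  simp_rw [hexpand]
  rw [intervalIntegral.integral_finsetSum fun i _ =>
    Continuous.intervalIntegrable (by fun_prop) _ _]
  simp only [intervalIntegral.integral_const_mul, integral_exp_two_pi_I_mul, sub_eq_zero,
    Nat.cast_inj, mul_ite, mul_one, mul_zero, Finset.sum_ite_eq', Finset.mem_range]
  rw [if_pos (by omega)]

lemma one_sub_exp_two_mul_I (z : ℂ) : 1 - Complex.exp (2 * z * Complex.I) =
    -Complex.I * (2 * Complex.sin z) * Complex.exp (z * Complex.I) := by
  have hinv : Complex.exp (-z * Complex.I) * Complex.exp (z * Complex.I) = 1 := by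
    rw [← Complex.exp_add]; simp
  have hsq : Complex.exp (2 * z * Complex.I) = Complex.exp (z * Complex.I) ^ 2 := by
    rw [← Complex.exp_nat_mul]; push_cast; ring_nf
  rw [hsq, Complex.sin]
  linear_combination (-1) * hinv + (Complex.exp (-z * Complex.I) - Complex.exp (z * Complex.I)) *
    Complex.exp (z * Complex.I) * Complex.I_sq

lemma sum_range_add_one (n : ℕ) : ∑ k ∈ Finset.range n, ((k : ℂ) + 1) = n * (n + 1) / 2 := by
  induction n with
  | zero => simp
  | succ n ih => rw [Finset.sum_range_succ, ih]; push_cast; ring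

lemma aeval_exp_prod_one_sub_X_pow (n : ℕ) (x : ℝ) :
    aeval (Complex.exp (2 * π * Complex.I * x)) (∏ k ∈ Finset.Icc 1 n, (1 - (X : ℤ[X]) ^ k)) =
      (-Complex.I) ^ n * sineProd n x * Complex.exp (π * Complex.I * (n * (n + 1) / 2) * x) := by
  have hfactor (k : ℕ) : 1 - Complex.exp (2 * π * Complex.I * x) ^ (k + 1) =
      -Complex.I * (2 * sin (π * ((k + 1) * x)) : ℝ) *
        Complex.exp ((k + 1) * (π * Complex.I * x)) := by
    have h := one_sub_exp_two_mul_I (π * ((k + 1) * x))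
    rw [← Complex.exp_nat_mul]
    push_cast
    convert h using 3 <;> ring
  have hIcc : Finset.Icc 1 n = Finset.Ico 1 (n + 1) := by ext; simp
  simp_rw [hIcc, Finset.prod_Ico_eq_prod_range, Nat.add_sub_cancel, add_comm 1, map_prod, map_sub,
    map_one, map_pow, aeval_X, hfactor]
  rw [Finset.prod_mul_distrib, Finset.prod_mul_distrib, Finset.prod_const, Finset.card_range,
    ← Complex.exp_sum, ← Finset.sum_mul, sum_range_add_one, sineProd, Complex.ofReal_prod]
  congr 2
  ring

lemma a_two_mul_eq_integral (h j : ℕ) :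
    (a (2 * h) j : ℝ) = (-1) ^ h * ∫ x in (0 : ℝ)..1,
      sineProd (2 * h) x * cos (π * (h * (2 * h + 1) - 2 * j : ℤ) * x) := by
  have hcont := (contDiff_sineProd (2 * h)).continuous
  have hcoeff : (a (2 * h) j : ℂ) = ∫ x in (0 : ℝ)..1, ((-1) ^ h * sineProd (2 * h) x : ℝ) *
      Complex.exp ((π * (h * (2 * h + 1) - 2 * j : ℤ) * x : ℝ) * Complex.I) := by
    rw [a, coeff_eq_integral]
    congr 1 with x
    rw [aeval_exp_prod_one_sub_X_pow, pow_mul, neg_sq, Complex.I_sq, mul_assoc, ← Complex.exp_add]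
    push_cast
    congr 2
    ring
  have hre := congrArg Complex.re hcoeff
  rw [← Complex.reCLM_apply, ← Complex.reCLM_apply,
    ← Complex.reCLM.intervalIntegral_comp_comm (Continuous.intervalIntegrable (by fun_prop) _ _)]
    at hre
  simp only [Complex.reCLM_apply, Complex.re_ofReal_mul, Complex.exp_ofReal_mul_I_re,
    Complex.intCast_re, mul_assoc, intervalIntegral.integral_const_mul] at hre
  simpa only [mul_assoc] using hre

lemma sineProd_one_sub (n : ℕ) (x : ℝ) :
    sineProd n (1 - x) = (∏ k ∈ Finset.range n, (-1) ^ k) * sineProd n x := by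
  rw [sineProd, sineProd, ← Finset.prod_mul_distrib]
  refine Finset.prod_congr rfl fun k _ => ?_
  have harg : π * ((k + 1) * (1 - x)) = (k + 1 : ℕ) * π - π * ((k + 1) * x) := by push_cast; ring
  rw [harg, sin_nat_mul_pi_sub]
  ring

lemma prod_range_two_mul_neg_one_pow (h : ℕ) :
    ∏ k ∈ Finset.range (2 * h), (-1 : ℝ) ^ k = (-1) ^ h := by
  induction h with
  | zero => simp
  | succ h ih =>
    rw [Nat.mul_succ, Finset.prod_range_succ, Finset.prod_range_succ, ih, pow_succ (-1) (2 * h),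
      pow_mul, pow_succ (-1) h]
    norm_num

lemma integral_sineProd_two_mul_mul_cos {h : ℕ} {ω : ℤ} (hω : Even (ω - h)) :
    ∫ x in (0 : ℝ)..1, sineProd (2 * h) x * cos (π * ω * x) =
      2 * ∫ x in (0 : ℝ)..1 / 2, sineProd (2 * h) x * cos (π * ω * x) := by
  have hcont := (contDiff_sineProd (2 * h)).continuous
  have hint (u v : ℝ) : IntervalIntegrable (fun x => sineProd (2 * h) x * cos (π * ω * x))
      volume u v := Continuous.intervalIntegrable (by fun_prop) _ _
  have hsign : (-1 : ℝ) ^ ω = (-1) ^ h := by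
    rw [← zpow_natCast, ← sub_add_cancel ω h, zpow_add₀ (by norm_num), hω.neg_one_zpow, one_mul]
  have hreflect (x : ℝ) : sineProd (2 * h) (1 - x) * cos (π * ω * (1 - x)) =
      sineProd (2 * h) x * cos (π * ω * x) := by
    have harg : π * ω * (1 - x) = ω * π - π * ω * x := by ring
    have hsq : (-1 : ℝ) ^ h * (-1) ^ h = 1 := by rw [← mul_pow]; norm_num
    rw [sineProd_one_sub, prod_range_two_mul_neg_one_pow, harg, cos_int_mul_pi_sub, hsign]
    linear_combination sineProd (2 * h) x * cos (π * ω * x) * hsq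
  have hsubst := intervalIntegral.integral_comp_sub_left (a := 0) (b := 1 / 2)
    (fun x => sineProd (2 * h) x * cos (π * ω * x)) 1
  rw [sub_half, sub_zero] at hsubst
  rw [← intervalIntegral.integral_add_adjacent_intervals (hint 0 (1 / 2)) (hint _ _), ← hsubst]
  simp_rw [hreflect]
  ring

lemma a_two_mul_eq_half_integral (h j : ℕ) :
    (a (2 * h) j : ℝ) = (-1) ^ h * (2 * ∫ x in (0 : ℝ)..1 / 2, sineProd (2 * h) x *
      cos (π * (h * (2 * h + 1) - 2 * j : ℤ).natAbs * x)) := by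
  have hcos (ω : ℤ) (x : ℝ) : cos (π * ω.natAbs * x) = cos (π * ω * x) := by
    rcases abs_choice (ω : ℝ) with hω | hω <;> simp [Nat.cast_natAbs, hω]
  have hparity : Even ((h * (2 * h + 1) - 2 * j : ℤ) - h) := ⟨h * h - j, by ring⟩
  simp_rw [hcos]
  rw [a_two_mul_eq_integral, integral_sineProd_two_mul_mul_cos hparity]

lemma natAbs_sub_two_mul_div_two (q j : ℕ) :
    (q - 2 * (q / 2 : ℕ) : ℤ).natAbs ≤ 1 ∧
      ((q - 2 * j : ℤ).natAbs = (q - 2 * (q / 2 : ℕ) : ℤ).natAbs ∨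
        (q - 2 * (q / 2 : ℕ) : ℤ).natAbs + 2 ≤ (q - 2 * j : ℤ).natAbs) := by
  omega

/-- All coefficients of `(q;q)_{2h}` are bounded in absolute value by the central one, which has
sign `(-1) ^ h` (or vanishes). -/
def CentralDominates (h : ℕ) : Prop :=
  ∀ j, |a (2 * h) j| ≤ (-1) ^ h * a (2 * h) (2 * h * (2 * h + 1) / 4)

theorem centralDominates_of_le {h : ℕ} (hn : 800 ≤ 2 * h) : CentralDominates h := by
  intro j
  have hcont := (contDiff_sineProd (2 * h)).continuous
  have hcentral : 2 * h * (2 * h + 1) / 4 = h * (2 * h + 1) / 2 := by rw [mul_assoc]; omega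
  have hcast : (h * (2 * h + 1) : ℤ) = (h * (2 * h + 1) : ℕ) := by push_cast; rfl
  set e := (h * (2 * h + 1) - 2 * ↑(2 * h * (2 * h + 1) / 4) : ℤ).natAbs with he_def
  set m := (h * (2 * h + 1) - 2 * j : ℤ).natAbs with hm_def
  have he : e ≤ 1 := by rw [he_def, hcast, hcentral]; exact (natAbs_sub_two_mul_div_two _ j).1
  have hm : m = e ∨ e + 2 ≤ m := by
    rw [he_def, hm_def, hcast, hcentral]; exact (natAbs_sub_two_mul_div_two _ j).2
  set A := ∫ x in (0 : ℝ)..1 / 2, sineProd (2 * h) x * cos (π * e * x) with hA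
  set B := ∫ x in (0 : ℝ)..1 / 2, sineProd (2 * h) x * cos (π * m * x) with hB
  have hsub (σ : ℝ) : ∫ x in (0 : ℝ)..1 / 2, sineProd (2 * h) x *
      (cos (π * e * x) - σ * cos (π * m * x)) = A - σ * B := by
    rw [hA, hB, ← intervalIntegral.integral_const_mul, ← intervalIntegral.integral_sub
      (Continuous.intervalIntegrable (by fun_prop) _ _)
      (Continuous.intervalIntegrable (by fun_prop) _ _)]
    congr 1 with x
    ring
  have hlower : -A ≤ B := by
    have := integral_sineProd_mul_cos_sub_nonneg hn he (Or.inr ⟨rfl, show e ≤ m by omega⟩)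
    rw [hsub] at this
    linarith
  have hupper : B ≤ A := by
    rcases hm with hm | hm
    · rw [hA, hB, hm]
    · have := integral_sineProd_mul_cos_sub_nonneg hn he (Or.inl ⟨rfl, hm⟩)
      rw [hsub] at this
      linarith
  have hreal : |(a (2 * h) j : ℝ)| ≤ (-1) ^ h * a (2 * h) (2 * h * (2 * h + 1) / 4) := by
    rw [a_two_mul_eq_half_integral, a_two_mul_eq_half_integral, abs_mul, abs_neg_one_pow, one_mul,
      ← mul_assoc, ← mul_pow, neg_one_mul, neg_neg, one_pow, one_mul, abs_le]
    constructor <;> linarith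
  exact_mod_cast hreal

end Fourier

section Coefficients

lemma a_succ (n i : ℕ) : a (n + 1) i = a n i - if n + 1 ≤ i then a n (i - (n + 1)) else 0 := by
  rw [a, Finset.prod_Icc_succ_top (by omega), mul_sub, mul_one, coeff_sub, coeff_mul_X_pow']
  rfl

lemma abs_a_succ_le {n : ℕ} {K : ℤ} (hK : ∀ i, |a n i| ≤ K) (i : ℕ) : |a (n + 1) i| ≤ 2 * K := by
  rw [a_succ, two_mul]
  refine (abs_sub _ _).trans (add_le_add (hK i) ?_)
  split_ifs
  · exact hK _
  · simpa using (abs_nonneg _).trans (hK 0)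

lemma abs_a_le_two_pow (n i : ℕ) : |a n i| ≤ 2 ^ n := by
  induction n generalizing i with
  | zero => rw [a]; simp only [coeff_one, Finset.Icc_eq_empty_of_lt, zero_lt_one,
      Finset.prod_empty]; split_ifs <;> simp
  | succ n ih => rw [pow_succ']; exact abs_a_succ_le ih i

lemma natDegree_prod_one_sub_X_pow_le (n : ℕ) :
    (∏ k ∈ Finset.Icc 1 n, (1 - (X : ℤ[X]) ^ k)).natDegree ≤ n * (n + 1) / 2 := by
  have hfactor (k : ℕ) : (1 - (X : ℤ[X]) ^ k).natDegree ≤ k :=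
    (natDegree_sub_le _ _).trans (by simp)
  have hsubset : Finset.Icc 1 n ⊆ Finset.range (n + 1) := fun k => by simp
  calc _ ≤ ∑ k ∈ Finset.Icc 1 n, (1 - (X : ℤ[X]) ^ k).natDegree := natDegree_prod_le _ _
    _ ≤ ∑ k ∈ Finset.Icc 1 n, k := Finset.sum_le_sum fun k _ => hfactor k
    _ ≤ ∑ k ∈ Finset.range (n + 1), k := Finset.sum_le_sum_of_subset hsubset
    _ = n * (n + 1) / 2 := by rw [Finset.sum_range_id, Nat.add_sub_cancel, mul_comm]

lemma a_eq_zero_of_lt {n i : ℕ} (hi : n * (n + 1) / 2 < i) : a n i = 0 :=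
  coeff_eq_zero_of_natDegree_lt ((natDegree_prod_one_sub_X_pow_le n).trans_lt hi)

lemma two_mul_mul_succ_div_two (h : ℕ) : 2 * h * (2 * h + 1) / 2 = h * (2 * h + 1) := by
  rw [mul_assoc, Nat.mul_div_cancel_left _ two_pos]

/-- The natural number `∏_{k=1}^n (x ^ k - 1)`, that is `(-1) ^ n` times the value of `(q;q)_n`
at `q = x`. For even `n` and `x = 2 ^ (b + 1)` it packs all the coefficients of `(q;q)_n` into one
number (Kronecker substitution). -/
def packedProd (x n : ℕ) : ℕ :=
  ∏ k ∈ Finset.range n, (x ^ (k + 1) - 1)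

lemma packedProd_succ (x n : ℕ) :
    packedProd x (n + 1) = packedProd x n * x ^ (n + 1) - packedProd x n := by
  rw [packedProd, Finset.prod_range_succ, Nat.mul_sub, mul_one]
  rfl

lemma packedProd_two_mul_eq_sum {x h L : ℕ} (hx : 1 ≤ x) (hL : h * (2 * h + 1) < L) :
    (packedProd x (2 * h) : ℤ) = ∑ i ∈ Finset.range L, a (2 * h) i * (x : ℤ) ^ i := by
  have hIcc : Finset.Icc 1 (2 * h) = Finset.Ico 1 (2 * h + 1) := by ext; simp
  have hfactor (k : ℕ) : eval (x : ℤ) (1 - X ^ (1 + k)) = -1 * ((x ^ (k + 1) - 1 : ℕ) : ℤ) := by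
    rw [Nat.cast_sub (Nat.one_le_pow _ _ hx)]
    simp [add_comm]
  have heval : (∏ k ∈ Finset.Icc 1 (2 * h), (1 - (X : ℤ[X]) ^ k)).eval (x : ℤ) =
      packedProd x (2 * h) := by
    simp_rw [eval_prod, hIcc, Finset.prod_Ico_eq_prod_range, Nat.add_sub_cancel, hfactor,
      Finset.prod_mul_distrib]
    simp [packedProd]
  rw [← heval, eval_eq_sum_range' ((natDegree_prod_one_sub_X_pow_le _).trans_lt
    (by rwa [two_mul_mul_succ_div_two]))]
  rfl

end Coefficients

section Digits

lemma sum_mul_pow_ediv_emod {x : ℤ} {w : ℕ → ℤ} (hw : ∀ i, w i ∈ Ico 0 x) {j L : ℕ}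
    (hj : j < L) : (∑ i ∈ Finset.range L, w i * x ^ i) / x ^ j % x = w j := by
  have hx : 0 < x := (hw 0).1.trans_lt (hw 0).2
  induction L generalizing w j with
  | zero => omega
  | succ L ih =>
    have hsplit : ∑ i ∈ Finset.range (L + 1), w i * x ^ i =
        w 0 + x * ∑ i ∈ Finset.range L, w (i + 1) * x ^ i := by
      rw [Finset.sum_range_succ', Finset.mul_sum, add_comm, pow_zero, mul_one]
      congr 1
      exact Finset.sum_congr rfl fun i _ => by ring
    rw [hsplit]
    cases j with
    | zero => rw [pow_zero, Int.ediv_one, Int.add_mul_emod_self_left,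
        Int.emod_eq_of_lt (hw 0).1 (hw 0).2]
    | succ j =>
      rw [pow_succ', ← Int.ediv_ediv_of_nonneg hx.le, Int.add_mul_ediv_left _ _ hx.ne',
        Int.ediv_eq_zero_of_lt (hw 0).1 (hw 0).2, zero_add]
      exact ih (fun i => hw (i + 1)) (by omega)

lemma natCast_div_pow_mod {x V j L : ℕ} {w : ℕ → ℤ} (hw : ∀ i, w i ∈ Ico 0 (x : ℤ))
    (hV : (V : ℤ) = ∑ i ∈ Finset.range L, w i * (x : ℤ) ^ i) (hj : j < L) :
    ((V / x ^ j % x : ℕ) : ℤ) = w j := by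
  push_cast [hV]
  exact sum_mul_pow_ediv_emod hw hj

lemma land_mask_div (V b s : ℕ) :
    (V &&& (2 ^ b - 1) <<< s) / 1 <<< s = V / 2 ^ s % 2 ^ b := by
  rw [Nat.one_shiftLeft, ← Nat.shiftRight_eq_div_pow, Nat.shiftRight_and_distrib,
    Nat.shiftLeft_shiftRight, Nat.and_two_pow_sub_one_eq_mod, Nat.shiftRight_eq_div_pow]

/-- The number whose `L` digits in base `2 ^ (b + 1)` are all `1`. -/
def repunit (b L : ℕ) : ℕ :=
  ∑ i ∈ Finset.range L, (2 ^ (b + 1)) ^ i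

lemma two_pow_le_digit_of_land {b V j L : ℕ}
    (hV : V &&& 2 ^ b * repunit b L = 2 ^ b * repunit b L) (hj : j < L) :
    2 ^ b ≤ V / (2 ^ (b + 1)) ^ j % 2 ^ (b + 1) := by
  set H := 2 ^ b * repunit b L with hH
  have hdigit : H / (2 ^ (b + 1)) ^ j % 2 ^ (b + 1) = 2 ^ b := by
    have := natCast_div_pow_mod (x := 2 ^ (b + 1)) (V := H) (w := fun _ => 2 ^ b)
      (fun _ => ⟨by positivity, by push_cast; gcongr <;> simp⟩)
      (by rw [hH, repunit]; push_cast; rw [Finset.mul_sum]) hj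
    exact_mod_cast this
  have hbit (U : ℕ) : (U / (2 ^ (b + 1)) ^ j % 2 ^ (b + 1)).testBit b =
      U.testBit ((b + 1) * j + b) := by
    rw [Nat.testBit_mod_two_pow, ← pow_mul, Nat.testBit_div_two_pow]
    simp [add_comm]
  have hHbit : H.testBit ((b + 1) * j + b) = true := by
    rw [← hbit, hdigit, Nat.testBit_two_pow_self]
  rw [← hV, Nat.testBit_and, Bool.and_eq_true] at hHbit
  exact Nat.ge_two_pow_of_testBit ((hbit V).trans hHbit.1)

lemma neg_le_of_land {b V L : ℕ} {C : ℤ} {c : ℕ → ℤ} (hc : ∀ i, 4 * |c i| ≤ 2 ^ b)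
    (hC₀ : 0 ≤ C) (hC : 16 * C ≤ 2 ^ b)
    (hV : (V : ℤ) = ∑ i ∈ Finset.range L, (2 ^ b + C + c i) * (2 ^ (b + 1)) ^ i)
    (hland : V &&& 2 ^ b * repunit b L = 2 ^ b * repunit b L) {j : ℕ} (hj : j < L) : -C ≤ c j := by
  have hw (i : ℕ) : 2 ^ b + C + c i ∈ Ico 0 (((2 ^ (b + 1) : ℕ) : ℤ)) := by
    have := hc i
    have := neg_abs_le (c i)
    have := le_abs_self (c i)
    have : (0 : ℤ) < 2 ^ b := by positivity
    push_cast
    rw [pow_succ]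
    constructor <;> linarith
  have hdigit := natCast_div_pow_mod hw (by exact_mod_cast hV) hj
  have hhigh : (2 ^ b : ℤ) ≤ _ := Int.ofNat_le.2 (two_pow_le_digit_of_land hland hj)
  linarith

end Digits

section Verification

/-- `force N f` is `f N`. The match makes the kernel evaluate `N` to a numeral first, so that the
occurrences of `N` in `f` share a single evaluation. -/
def force : ℕ → (ℕ → Bool) → Bool
  | 0, f => f 0
  | m + 1, f => f (m + 1)

/-- The product of `2 ^ ((b + 1) * k) - 1` over `lo ≤ k < lo + len`, by repeated halving of the
range down to depth `d`; it requires `1 ≤ len ≤ 2 ^ d`. -/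
def prodTree (b : ℕ) : ℕ → ℕ → ℕ → ℕ
  | 0, lo, _ => 1 <<< ((b + 1) * lo) - 1
  | d + 1, lo, len =>
    if len ≤ 1 then 1 <<< ((b + 1) * lo) - 1
    else prodTree b d lo (len / 2) * prodTree b d (lo + len / 2) (len - len / 2)

/-- Certificate for `CentralDominates h`, where `N` packs the coefficients of `(q;q)_{2h}` in base
`2 ^ (b + 1)` and `ones`, `high` are the numbers all of whose digits are `1`, respectively
`2 ^ b`. Every digit of `N + high` is a coefficient shifted by `2 ^ b`; this gives the signed
central coefficient `C`. All coefficients lie in `[-C, C]` once the top bit is set in every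
digit of both `(2 ^ b + C) * ones + N` and `(2 ^ b + C) * ones - N`. -/
def centralCheck (b ones high h N : ℕ) : Bool :=
  force ((b + 1) * (2 * h * (2 * h + 1) / 4)) fun s =>
  force (((N + high) &&& (2 ^ (b + 1) - 1) <<< s) / 1 <<< s) fun d =>
  force (if Even h then d - 2 ^ b else 2 ^ b - d) fun C =>
  force ((2 ^ b + C) * ones) fun W =>
  decide (16 * C ≤ 2 ^ b ∧ (W + N) &&& high = high ∧ (W - N) &&& high = high)

/-- `centralCheck` for the `k` indices following `h`, updating the packed product `N` by its
recurrence. -/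
def centralCheckLoop (b ones high : ℕ) : ℕ → ℕ → ℕ → Bool
  | 0, _, _ => true
  | k + 1, h, N =>
    force (N <<< ((b + 1) * (2 * h + 1)) - N) fun N₁ =>
    force (N₁ <<< ((b + 1) * (2 * h + 1 + 1)) - N₁) fun N₂ =>
    force (h + 1) fun h' =>
    centralCheck b ones high h' N₂ && centralCheckLoop b ones high k h' N₂

/-- Runs `centralCheck` for the indices `h + 1, …, h + k`. -/
def centralCheckFrom (b h k : ℕ) : Bool :=
  force ((h + k) * (2 * (h + k) + 1) + 1) fun L =>
  force ((1 <<< ((b + 1) * L) - 1) / (2 ^ (b + 1) - 1)) fun ones =>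
  force (2 ^ b * ones) fun high =>
  force (prodTree b 10 1 (2 * h)) fun N => centralCheckLoop b ones high k h N

@[simp]
lemma force_eq (N : ℕ) (f : ℕ → Bool) : force N f = f N := by
  cases N <;> rfl

lemma prodTree_eq_prod (b d lo len : ℕ) (hlen : 1 ≤ len) (hd : len ≤ 2 ^ d) :
    prodTree b d lo len = ∏ k ∈ Finset.range len, ((2 ^ (b + 1)) ^ (lo + k) - 1) := by
  have hleaf (lo : ℕ) : 1 <<< ((b + 1) * lo) - 1 =
      ∏ k ∈ Finset.range 1, ((2 ^ (b + 1)) ^ (lo + k) - 1) := by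
    rw [Nat.one_shiftLeft, pow_mul, Finset.prod_range_one, add_zero]
  induction d generalizing lo len with
  | zero =>
    obtain rfl : len = 1 := by omega
    exact hleaf lo
  | succ d ih =>
    rw [prodTree]
    split_ifs with hle
    · obtain rfl : len = 1 := by omega
      exact hleaf lo
    · rw [ih _ _ (by omega) (by omega), ih _ _ (by omega) (by omega)]
      conv_rhs => rw [← Nat.add_sub_cancel' (Nat.div_le_self len 2), Finset.prod_range_add]
      simp only [add_assoc]

variable {b L h : ℕ}

/-- The bound on the coefficients of `(q;q)_{2h}` under which two further factors cannot make
the digits of width `b + 1` overflow. -/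
def FitsWidth (b h : ℕ) : Prop :=
  ∀ i, 16 * |a (2 * h) i| ≤ 2 ^ b

lemma FitsWidth.mono {b' : ℕ} (hfit : FitsWidth b h) (hb : b ≤ b') : FitsWidth b' h := fun i =>
  (hfit i).trans (pow_le_pow_right₀ one_le_two hb)

lemma FitsWidth.four_mul_abs_succ_le (hfit : FitsWidth b h) (i : ℕ) :
    4 * |a (2 * (h + 1)) i| ≤ 2 ^ b := by
  have hdiv (i : ℕ) : |a (2 * h) i| ≤ 2 ^ b / 16 := by
    rw [Int.le_ediv_iff_mul_le (by norm_num), mul_comm]; exact hfit i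
  have : |a (2 * (h + 1)) i| ≤ 2 * (2 * (2 ^ b / 16)) := abs_a_succ_le (abs_a_succ_le hdiv) i
  omega

lemma natCast_central_digit (hL : h * (2 * h + 1) < L) (hfit : ∀ i, 4 * |a (2 * h) i| ≤ 2 ^ b)
    {j : ℕ} (hj : j < L) :
    (((packedProd (2 ^ (b + 1)) (2 * h) + 2 ^ b * repunit b L) / (2 ^ (b + 1)) ^ j % 2 ^ (b + 1)
      : ℕ) : ℤ) = 2 ^ b + a (2 * h) j := by
  refine natCast_div_pow_mod (w := fun i => 2 ^ b + a (2 * h) i) (fun i => ?_) ?_ hj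
  · have := hfit i
    have := neg_abs_le (a (2 * h) i)
    have := le_abs_self (a (2 * h) i)
    have : (0 : ℤ) < 2 ^ b := by positivity
    push_cast
    rw [pow_succ]
    constructor <;> linarith
  · rw [Nat.cast_add, packedProd_two_mul_eq_sum Nat.one_le_two_pow hL, repunit]
    push_cast
    rw [Finset.mul_sum, ← Finset.sum_add_distrib]
    exact Finset.sum_congr rfl fun i _ => by ring

lemma abs_a_le_of_land {C : ℕ} (hL : h * (2 * h + 1) < L)
    (hfit : ∀ i, 4 * |a (2 * h) i| ≤ 2 ^ b) (hC : 16 * C ≤ 2 ^ b)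
    (hadd : ((2 ^ b + C) * repunit b L + packedProd (2 ^ (b + 1)) (2 * h)) &&&
      2 ^ b * repunit b L = 2 ^ b * repunit b L)
    (hsub : ((2 ^ b + C) * repunit b L - packedProd (2 ^ (b + 1)) (2 * h)) &&&
      2 ^ b * repunit b L = 2 ^ b * repunit b L) (i : ℕ) :
    |a (2 * h) i| ≤ C := by
  have hN := packedProd_two_mul_eq_sum (x := 2 ^ (b + 1)) Nat.one_le_two_pow hL
  have hC' : 16 * (C : ℤ) ≤ 2 ^ b := by exact_mod_cast hC
  have hsum (s : ℤ) : (2 ^ b + C) * (repunit b L : ℤ) + s * packedProd (2 ^ (b + 1)) (2 * h) =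
      ∑ i ∈ Finset.range L, (2 ^ b + C + s * a (2 * h) i) * (2 ^ (b + 1)) ^ i := by
    rw [hN, repunit]
    push_cast
    rw [Finset.mul_sum, Finset.mul_sum, ← Finset.sum_add_distrib]
    exact Finset.sum_congr rfl fun i _ => by ring
  have hle : packedProd (2 ^ (b + 1)) (2 * h) ≤ (2 ^ b + C) * repunit b L := by
    have hnonneg : 0 ≤ (2 ^ b + C) * (repunit b L : ℤ) + -1 * packedProd (2 ^ (b + 1)) (2 * h) := by
      rw [hsum]
      refine Finset.sum_nonneg fun i _ => mul_nonneg ?_ (by positivity)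
      linarith [hfit i, le_abs_self (a (2 * h) i), abs_nonneg (a (2 * h) i)]
    zify
    linarith
  rcases lt_or_ge i L with hi | hi
  · have hlower := neg_le_of_land (c := fun i => 1 * a (2 * h) i) (by simpa using hfit)
      (Int.natCast_nonneg C) hC' (by rw [← hsum]; push_cast; ring) hadd hi
    have hupper := neg_le_of_land (c := fun i => -1 * a (2 * h) i) (by simpa using hfit)
      (Int.natCast_nonneg C) hC' (by rw [← hsum]; push_cast [hle]; ring) hsub hi
    exact abs_le.2 ⟨by linarith, by linarith⟩
  · rw [a_eq_zero_of_lt (by rw [two_mul_mul_succ_div_two]; omega)]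
    simp

lemma centralDominates_of_centralCheck (hL : h * (2 * h + 1) < L)
    (hfit : ∀ i, 4 * |a (2 * h) i| ≤ 2 ^ b)
    (hcheck : centralCheck b (repunit b L) (2 ^ b * repunit b L) h
      (packedProd (2 ^ (b + 1)) (2 * h)) = true) :
    CentralDominates h ∧ FitsWidth b h := by
  simp only [centralCheck, force_eq, land_mask_div, pow_mul, decide_eq_true_eq] at hcheck
  have hcentral : 2 * h * (2 * h + 1) / 4 < L := by rw [mul_assoc]; omega
  have hdigit := natCast_central_digit hL hfit hcentral
  set c := 2 * h * (2 * h + 1) / 4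
  set d := (packedProd (2 ^ (b + 1)) (2 * h) + 2 ^ b * repunit b L) / (2 ^ (b + 1)) ^ c %
    2 ^ (b + 1)
  set C := if Even h then d - 2 ^ b else 2 ^ b - d with hC_def
  obtain ⟨hC, hadd, hsub⟩ := hcheck
  have habs := abs_a_le_of_land hL hfit hC hadd hsub
  clear_value C d
  have hC_le : (C : ℤ) ≤ (-1) ^ h * a (2 * h) c := by
    have := abs_le.1 (habs c)
    have hpow : (2 : ℤ) ^ b = (2 ^ b : ℕ) := by norm_cast
    rw [hpow] at hdigit
    generalize 2 ^ b = B at hC_def hdigit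
    rcases Nat.even_or_odd h with hh | hh
    · rw [if_pos hh] at hC_def
      rw [hh.neg_one_pow, one_mul]
      omega
    · rw [if_neg (Nat.not_even_iff_odd.2 hh)] at hC_def
      rw [hh.neg_one_pow, neg_one_mul]
      omega
  have : 16 * (C : ℤ) ≤ 2 ^ b := by exact_mod_cast hC
  exact ⟨fun j => (habs j).trans hC_le, fun i => by linarith [habs i]⟩

/-- Centrality is established from `(q;q)_{34}` up to `(q;q)_{2h}`, and digits of width `b + 1`
suffice to continue. -/
structure VerifiedUpTo (b h : ℕ) : Prop where
  centralDominates : ∀ g, 17 ≤ g → g ≤ h → CentralDominates g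
  fitsWidth : FitsWidth b h

lemma VerifiedUpTo.centralCheckLoop {k : ℕ} (hv : VerifiedUpTo b h)
    (hL : (h + k) * (2 * (h + k) + 1) < L)
    (hcheck : centralCheckLoop b (repunit b L) (2 ^ b * repunit b L) k h
      (packedProd (2 ^ (b + 1)) (2 * h)) = true) : VerifiedUpTo b (h + k) := by
  induction k generalizing h with
  | zero => exact hv
  | succ k ih =>
    simp only [QPochhammer.centralCheckLoop, force_eq, Nat.shiftLeft_eq, pow_mul,
      ← packedProd_succ, Bool.and_eq_true] at hcheck
    have hidx : h + (k + 1) = h + 1 + k := by ring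
    have hL' : (h + 1) * (2 * (h + 1) + 1) < L := lt_of_le_of_lt (by gcongr <;> omega) hL
    obtain ⟨hdom, hfit⟩ :=
      centralDominates_of_centralCheck hL' hv.fitsWidth.four_mul_abs_succ_le hcheck.1
    rw [hidx] at hL ⊢
    refine ih ⟨fun g hg hgh => ?_, hfit⟩ hL hcheck.2
    rcases Nat.le_succ_iff.1 hgh with hle | rfl
    exacts [hv.centralDominates g hg hle, hdom]

lemma VerifiedUpTo.add {b' : ℕ} (hv : VerifiedUpTo b h) (k : ℕ)
    (hcheck : centralCheckFrom b' h k = true) (hb : b ≤ b' := by norm_num)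
    (h₀ : 1 ≤ h := by norm_num) (h₁ : h ≤ 512 := by norm_num) : VerifiedUpTo b' (h + k) := by
  have hrep (L : ℕ) : (1 <<< ((b' + 1) * L) - 1) / (2 ^ (b' + 1) - 1) = repunit b' L := by
    rw [repunit, Nat.geomSum_eq (Nat.le_self_pow (by omega) 2), Nat.one_shiftLeft, pow_mul]
  have hprod : prodTree b' 10 1 (2 * h) = packedProd (2 ^ (b' + 1)) (2 * h) := by
    rw [prodTree_eq_prod _ _ _ _ (by omega) (by omega), packedProd]
    simp only [add_comm]
  simp only [centralCheckFrom, force_eq, hrep, hprod] at hcheck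
  exact VerifiedUpTo.centralCheckLoop ⟨hv.centralDominates, hv.fitsWidth.mono hb⟩
    (Nat.lt_succ_self _) hcheck

lemma verifiedUpTo_sixteen : VerifiedUpTo 84 16 where
  centralDominates g hg hgh := by omega
  fitsWidth i := by
    have := abs_a_le_two_pow (2 * 16) i
    norm_num1 at this ⊢
    linarith

/- The width in each step leaves room for the coefficients at its last index. The range is split
because the kernel keeps all intermediate numbers, of up to 9 megabytes, while it checks one
`decide`. -/
lemma verifiedUpTo_three_hundred_ninety_nine : VerifiedUpTo 226 399 := by
  have h₁₆ := verifiedUpTo_sixteen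
  have h₁₄₉ : VerifiedUpTo 84 149 := h₁₆.add 133 (by decide +kernel)
  have h₂₀₂ : VerifiedUpTo 114 202 := h₁₄₉.add 53 (by decide +kernel)
  have h₂₃₆ : VerifiedUpTo 133 236 := h₂₀₂.add 34 (by decide +kernel)
  have h₂₆₁ : VerifiedUpTo 148 261 := h₂₃₆.add 25 (by decide +kernel)
  have h₂₈₁ : VerifiedUpTo 159 281 := h₂₆₁.add 20 (by decide +kernel)
  have h₂₉₈ : VerifiedUpTo 169 298 := h₂₈₁.add 17 (by decide +kernel)
  have h₃₁₂ : VerifiedUpTo 176 312 := h₂₉₈.add 14 (by decide +kernel)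
  have h₃₂₅ : VerifiedUpTo 184 325 := h₃₁₂.add 13 (by decide +kernel)
  have h₃₃₆ : VerifiedUpTo 190 336 := h₃₂₅.add 11 (by decide +kernel)
  have h₃₄₆ : VerifiedUpTo 196 346 := h₃₃₆.add 10 (by decide +kernel)
  have h₃₅₆ : VerifiedUpTo 201 356 := h₃₄₆.add 10 (by decide +kernel)
  have h₃₆₅ : VerifiedUpTo 207 365 := h₃₅₆.add 9 (by decide +kernel)
  have h₃₇₃ : VerifiedUpTo 211 373 := h₃₆₅.add 8 (by decide +kernel)
  have h₃₈₁ : VerifiedUpTo 216 381 := h₃₇₃.add 8 (by decide +kernel)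
  have h₃₈₈ : VerifiedUpTo 220 388 := h₃₈₁.add 7 (by decide +kernel)
  have h₃₉₅ : VerifiedUpTo 224 395 := h₃₈₈.add 7 (by decide +kernel)
  exact h₃₉₅.add 4 (by decide +kernel)

end Verification

lemma centralDominates {h : ℕ} (hh : 17 ≤ h) : CentralDominates h := by
  rcases Nat.lt_or_ge h 400 with hlt | hge
  · exact verifiedUpTo_three_hundred_ninety_nine.centralDominates h hh (by omega)
  · exact centralDominates_of_le (by omega)

lemma natCast_M_eq_abs {n c : ℕ} (hmax : ∀ j, |a n j| ≤ |a n c|) (hc : c ≤ n * (n + 1) / 2) :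
    (M n : ℤ) = |a n c| := by
  rw [Int.abs_eq_natAbs, Nat.cast_inj, M]
  exact le_antisymm (Finset.sup_le fun j _ => Int.ofNat_le.1 (by simpa using hmax j))
    (Finset.le_sup (f := fun i => (a n i).natAbs) (Finset.mem_range_succ_iff.2 hc))

lemma CentralDominates.central_eq {h : ℕ} (hdom : CentralDominates h) :
    a (2 * h) (2 * h * (2 * h + 1) / 4) = (-1) ^ h * M (2 * h) := by
  set c := 2 * h * (2 * h + 1) / 4
  have hsign : (-1) ^ h * a (2 * h) c ≤ |a (2 * h) c| := by
    simpa [abs_mul] using le_abs_self ((-1) ^ h * a (2 * h) c)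
  have habs : |a (2 * h) c| = (-1) ^ h * a (2 * h) c := le_antisymm (hdom c) hsign
  rw [natCast_M_eq_abs (fun j => (hdom j).trans hsign) (Nat.div_le_div_left (by simp) two_pos),
    habs, ← mul_assoc, ← mul_pow]
  simp

end QPochhammer

theorem stmt_8_general (n : ℕ) (heven : Even n) (h1 : 34 ≤ n) :
    (n % 4 = 0 → a n (n * (n + 1) / 4) = (M n : ℤ)) ∧
    (n % 4 = 2 → a n (n * (n + 1) / 4) = -(M n : ℤ)) := by
  obtain ⟨h, rfl⟩ := heven.two_dvd
  have hcentral := (QPochhammer.centralDominates (h := h) (by omega)).central_eq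
  refine ⟨fun hmod => ?_, fun hmod => ?_⟩
  · have heven : Even h := Nat.even_iff.2 (by omega)
    rw [hcentral, heven.neg_one_pow, one_mul]
  · have hodd : Odd h := Nat.odd_iff.2 (by omega)
    rw [hcentral, hodd.neg_one_pow, neg_one_mul]

/-- For even `n` with `34 ≤ n ≤ 75000`: if `n ≡ 0 (mod 4)` then
`a(n, n(n+1)/4) = M n`, and if `n ≡ 2 (mod 4)` then `a(n, ⌊n(n+1)/4⌋) = -M n`. -/
theorem stmt_8 (n : ℕ) (heven : Even n) (h1 : 34 ≤ n) (h2 : n ≤ 75000) :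
    (n % 4 = 0 → a n (n * (n + 1) / 4) = (M n : ℤ)) ∧
    (n % 4 = 2 → a n (n * (n + 1) / 4) = -(M n : ℤ)) :=
  stmt_8_general n heven h1
end

section
/- For n = 391, the least index i with |a(391,i)| = M_391 is L(391) = 391·392/4 - 124 = 38194. -/
open Polynomial

/-! Kronecker substitution turns the statement about the coefficients of `(q;q)_n` into bit
operations on one large natural number. All coefficients are at most `2 ^ n` in absolute value, so
after adding a suitable constant to each of them, the value at a power `2 ^ (c + 1)` with `n < c`
stores them in disjoint blocks of `c + 1` bits. The constant can be chosen so that a coefficient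
exceeds a given `m` exactly when the top bit of its block is set, and a bitwise conjunction with
the mask of all top bits tests this for all coefficients at once. For `n = 391` this number has
about thirty million bits. -/

theorem prod_range_mul_eq_prod_prod {β : Type*} [CommMonoid β] (f : ℕ → β) (r s : ℕ) :
    ∏ k ∈ Finset.range (r * s), f k =
      ∏ i ∈ Finset.range r, ∏ j ∈ Finset.range s, f (i * s + j) := by
  induction r with
  | zero => simp
  | succ r ih => rw [Nat.succ_mul, Finset.prod_range_add, Finset.prod_range_succ, ih]

section DigitwiseLand

theorem land_two_pow_mul_add {k u v : ℕ} (hu : u < 2 ^ k) (hv : v < 2 ^ k) (x y : ℕ) :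
    (2 ^ k * x + u) &&& (2 ^ k * y + v) = 2 ^ k * (x &&& y) + (u &&& v) := by
  refine Nat.eq_of_testBit_eq fun j ↦ ?_
  simp only [Nat.testBit_land, Nat.testBit_two_pow_mul_add _ hu, Nat.testBit_two_pow_mul_add _ hv,
    Nat.testBit_two_pow_mul_add _ (Nat.and_lt_two_pow u hv)]
  split <;> rfl

theorem sum_range_succ_mul_pow {R : Type*} [CommSemiring R] (b : R) (n : ℕ) (u : ℕ → R) :
    ∑ i ∈ Finset.range (n + 1), u i * b ^ i =
      b * ∑ i ∈ Finset.range n, u (i + 1) * b ^ i + u 0 := by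
  rw [Finset.sum_range_succ', Finset.mul_sum, pow_zero, mul_one]
  congr 1
  exact Finset.sum_congr rfl fun i _ ↦ by ring

theorem land_sum_mul_two_pow_pow {k n : ℕ} {u v : ℕ → ℕ} (hu : ∀ i < n, u i < 2 ^ k)
    (hv : ∀ i < n, v i < 2 ^ k) :
    (∑ i ∈ Finset.range n, u i * (2 ^ k) ^ i) &&& (∑ i ∈ Finset.range n, v i * (2 ^ k) ^ i) =
      ∑ i ∈ Finset.range n, (u i &&& v i) * (2 ^ k) ^ i := by
  induction n generalizing u v with
  | zero => simp
  | succ n ih =>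
    simp only [sum_range_succ_mul_pow]
    rw [land_two_pow_mul_add (hu 0 n.succ_pos) (hv 0 n.succ_pos),
      ih (fun i hi ↦ hu (i + 1) (by omega)) (fun i hi ↦ hv (i + 1) (by omega))]

theorem land_two_pow_eq_zero_iff_lt {c u : ℕ} (hu : u < 2 ^ (c + 1)) :
    u &&& 2 ^ c = 0 ↔ u < 2 ^ c := by
  rw [Nat.and_two_pow, Nat.testBit_eq_decide_div_mod_eq]
  have hquot : u / 2 ^ c < 2 := Nat.div_lt_of_lt_mul (by rwa [← pow_succ])
  rw [Nat.mod_eq_of_lt hquot, ← Nat.div_eq_zero_iff_lt (by positivity)]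
  interval_cases u / 2 ^ c <;> simp

end DigitwiseLand

section Repunit

/-- The number whose base-`b` expansion consists of `k` digits `1`. It is defined by the closed form
so that it can be evaluated for large `k`; the division is only meaningful for `2 ≤ b`. -/
def repunit (b k : ℕ) : ℕ := (b ^ k - 1) / (b - 1)

theorem repunit_eq_sum {b : ℕ} (hb : 2 ≤ b) (k : ℕ) :
    repunit b k = ∑ i ∈ Finset.range k, b ^ i :=
  (Nat.geomSum_eq hb k).symm

theorem repunit_eq_sum_ite {b k n : ℕ} (hb : 2 ≤ b) (hkn : k ≤ n) :
    repunit b k = ∑ i ∈ Finset.range n, (if i < k then 1 else 0) * b ^ i := by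
  have hfilter : (Finset.range n).filter (· < k) = Finset.range k := by
    ext i
    simp only [Finset.mem_filter, Finset.mem_range]
    omega
  simp only [repunit_eq_sum hb, ite_mul, one_mul, zero_mul, ← Finset.sum_filter, hfilter]

theorem sum_land_two_pow_mul_repunit_eq_zero_iff {c n : ℕ} {u : ℕ → ℕ}
    (hu : ∀ i < n, u i < 2 ^ (c + 1)) :
    (∑ i ∈ Finset.range n, u i * (2 ^ (c + 1)) ^ i) &&& 2 ^ c * repunit (2 ^ (c + 1)) n = 0 ↔
      ∀ i < n, u i < 2 ^ c := by
  rw [repunit_eq_sum (Nat.le_self_pow c.succ_ne_zero 2), Finset.mul_sum,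
    land_sum_mul_two_pow_pow hu fun i _ ↦ Nat.pow_lt_pow_succ one_lt_two, Finset.sum_eq_zero_iff]
  simp only [Finset.mem_range, mul_eq_zero, pow_eq_zero_iff', OfNat.ofNat_ne_zero, false_and,
    or_false]
  exact forall₂_congr fun i hi ↦ land_two_pow_eq_zero_iff_lt (hu i hi)

end Repunit

section KroneckerSubstitution

/-- Adding `h * repunit (2 ^ (c + 1)) D` shifts every coefficient by `h = 2 ^ c - 1 - m`, so the
base-`2 ^ (c + 1)` digits become nonnegative, and a digit has its top bit set exactly when the
corresponding coefficient (raised by `1` below `K`) exceeds `m`. -/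
theorem land_eq_zero_iff_coeff_add_le {p : ℤ[X]} {c D K h m W : ℕ} (hc : m + h + 1 = 2 ^ c)
    (hdeg : p.natDegree < D) (hcoeff : ∀ i, |p.coeff i| ≤ h) (hKD : K ≤ D)
    (hW : (W : ℤ) = p.eval (2 ^ (c + 1)) + h * repunit (2 ^ (c + 1)) D
      + repunit (2 ^ (c + 1)) K) :
    W &&& 2 ^ c * repunit (2 ^ (c + 1)) D = 0 ↔
      ∀ i < D, p.coeff i + (if i < K then 1 else 0) ≤ m := by
  have hb : 2 ≤ 2 ^ (c + 1) := Nat.le_self_pow c.succ_ne_zero 2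
  let u : ℕ → ℕ := fun i ↦ (p.coeff i + h + if i < K then 1 else 0).toNat
  have hu_cast (i : ℕ) : (u i : ℤ) = p.coeff i + h + if i < K then 1 else 0 := by
    have := neg_le_of_abs_le (hcoeff i)
    exact Int.toNat_of_nonneg (by split_ifs <;> linarith)
  have hu_lt (i : ℕ) : u i < 2 ^ (c + 1) := by
    have hu := hu_cast i
    have := le_of_abs_le (hcoeff i)
    rw [pow_succ, ← hc]
    split_ifs at hu <;> omega
  have hW_digits : W = ∑ i ∈ Finset.range D, u i * (2 ^ (c + 1)) ^ i := by
    zify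
    rw [hW, eval_eq_sum_range' hdeg, repunit_eq_sum hb, repunit_eq_sum_ite hb hKD]
    push_cast
    rw [Finset.mul_sum, ← Finset.sum_add_distrib, ← Finset.sum_add_distrib]
    exact Finset.sum_congr rfl fun i _ ↦ by rw [hu_cast]; ring
  rw [hW_digits, sum_land_two_pow_mul_repunit_eq_zero_iff fun i _ ↦ hu_lt i]
  refine forall₂_congr fun i _ ↦ ?_
  have hu := hu_cast i
  split_ifs at hu ⊢ <;> omega

/-- Numerical evidence that, for a polynomial with `D` coefficients whose value at `2 ^ (c + 1)` is
`V` up to sign, the coefficients of largest absolute value have absolute value `2 ^ c - 1 - h` and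
`J` is the least index of such a coefficient. The first condition keeps the subtraction in the third
from truncating. The second and third bound the coefficients from above and from below, strictly
before `J`; the last one says that the strict upper bound fails at `J` itself. -/
def IsPeakCertificate (V c D J h : ℕ) : Prop :=
  V ≤ h * repunit (2 ^ (c + 1)) D + repunit (2 ^ (c + 1)) J ∧
  (V + h * repunit (2 ^ (c + 1)) D + repunit (2 ^ (c + 1)) J) &&&
    2 ^ c * repunit (2 ^ (c + 1)) D = 0 ∧
  (h * repunit (2 ^ (c + 1)) D + repunit (2 ^ (c + 1)) J - V) &&&
    2 ^ c * repunit (2 ^ (c + 1)) D = 0 ∧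
  (V + h * repunit (2 ^ (c + 1)) D + repunit (2 ^ (c + 1)) (J + 1)) &&&
    2 ^ c * repunit (2 ^ (c + 1)) D ≠ 0

instance (V c D J h : ℕ) : Decidable (IsPeakCertificate V c D J h) :=
  inferInstanceAs (Decidable (_ ∧ _ ∧ _ ∧ _))

variable {p : ℤ[X]} {V c D J h : ℕ}

theorem IsPeakCertificate.abs_coeff_add_le {m : ℕ} (cert : IsPeakCertificate V c D J h)
    (hc : m + h + 1 = 2 ^ c) (hdeg : p.natDegree < D) (hcoeff : ∀ i, |p.coeff i| ≤ h)
    (hJ : J ≤ D) (hV : p.eval (2 ^ (c + 1)) = V) {i : ℕ} (hi : i < D) :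
    |p.coeff i| + (if i < J then 1 else 0) ≤ m := by
  obtain ⟨hVle, hupper, hlower, -⟩ := cert
  have hle := (land_eq_zero_iff_coeff_add_le hc hdeg hcoeff hJ (by rw [hV]; push_cast; ring)).1
    hupper i hi
  have hge := (land_eq_zero_iff_coeff_add_le (p := -p) hc (by rwa [natDegree_neg])
    (by simpa only [coeff_neg, abs_neg] using hcoeff) hJ
    (by rw [Nat.cast_sub hVle, eval_neg, hV]; push_cast; ring)).1 hlower i hi
  rw [coeff_neg] at hge
  rcases abs_choice (p.coeff i) with habs | habs <;> rwa [habs]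

theorem IsPeakCertificate.le_coeff {m : ℕ} (cert : IsPeakCertificate V c D J h)
    (hc : m + h + 1 = 2 ^ c) (hdeg : p.natDegree < D) (hcoeff : ∀ i, |p.coeff i| ≤ h)
    (hJ : J < D) (hV : p.eval (2 ^ (c + 1)) = V) : m ≤ p.coeff J := by
  obtain ⟨i, hi, hlt⟩ : ∃ i < D, m < p.coeff i + if i < J + 1 then 1 else 0 := by
    simpa only [not_forall, exists_prop, not_le] using
      (land_eq_zero_iff_coeff_add_le hc hdeg hcoeff hJ (by rw [hV]; push_cast; ring)).not.1
        cert.2.2.2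
  have hle := cert.abs_coeff_add_le hc hdeg hcoeff hJ.le hV hi
  have := le_abs_self (p.coeff i)
  obtain rfl : i = J := by split_ifs at hlt hle <;> omega
  rw [if_pos i.lt_succ_self] at hlt
  omega

theorem IsPeakCertificate.abs_coeff_add_le_abs_coeff (cert : IsPeakCertificate V c D J h)
    (hh : h < 2 ^ c) (hdeg : p.natDegree < D) (hcoeff : ∀ i, |p.coeff i| ≤ h) (hJ : J < D)
    (hV : |p.eval (2 ^ (c + 1))| = V) {i : ℕ} (hi : i < D) :
    |p.coeff i| + (if i < J then 1 else 0) ≤ |p.coeff J| := by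
  obtain ⟨m, hm⟩ := Nat.exists_eq_add_of_lt hh
  have hc : m + h + 1 = 2 ^ c := by omega
  wlog hpos : p.eval (2 ^ (c + 1)) = V generalizing p
  · have heval_neg : (-p).eval (2 ^ (c + 1)) = V := by
      rw [eval_neg, ← hV, eq_comm, abs_eq_neg_self]
      exact le_of_not_ge fun hnonneg ↦ hpos (by rw [← hV, abs_of_nonneg hnonneg])
    simpa only [coeff_neg, abs_neg] using
      this (by rwa [natDegree_neg]) (by simpa only [coeff_neg, abs_neg] using hcoeff)
        (by rwa [eval_neg, abs_neg]) heval_neg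
  exact (cert.abs_coeff_add_le hc hdeg hcoeff hJ.le hpos hi).trans
    ((cert.le_coeff hc hdeg hcoeff hJ hpos).trans (le_abs_self _))

end KroneckerSubstitution

section QPochhammer

theorem abs_coeff_mul_one_sub_X_pow_le {R : Type*} [Ring R] [LinearOrder R] [IsOrderedRing R]
    {p : R[X]} {B : R} (hp : ∀ i, |p.coeff i| ≤ B) (k i : ℕ) :
    |(p * (1 - X ^ k)).coeff i| ≤ 2 * B := by
  have hB : 0 ≤ B := (abs_nonneg _).trans (hp 0)
  have hshift : |(p * X ^ k).coeff i| ≤ B := by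
    rw [coeff_mul_X_pow']
    split_ifs
    · exact hp _
    · rwa [abs_zero]
  rw [mul_one_sub, coeff_sub, two_mul]
  exact (abs_sub _ _).trans (add_le_add (hp i) hshift)

theorem abs_coeff_prod_one_sub_X_pow_le {R ι : Type*} [CommRing R] [LinearOrder R]
    [IsOrderedRing R] (s : Finset ι) (f : ι → ℕ) (i : ℕ) :
    |(∏ k ∈ s, (1 - X ^ f k : R[X])).coeff i| ≤ 2 ^ s.card := by
  classical
  induction s using Finset.induction_on generalizing i with
  | empty =>
    rw [Finset.prod_empty, coeff_one]
    split_ifs <;> simp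
  | insert k s hk ih =>
    rw [Finset.prod_insert hk, mul_comm, Finset.card_insert_of_notMem hk, pow_succ']
    exact abs_coeff_mul_one_sub_X_pow_le ih (f k) i

/-- The `q`-Pochhammer polynomial `(q;q)_n`, whose coefficients are the `a n i`. -/
noncomputable def qPochhammer (n : ℕ) : ℤ[X] := ∏ k ∈ Finset.Icc 1 n, (1 - X ^ k)

theorem abs_coeff_qPochhammer_le (n i : ℕ) : |(qPochhammer n).coeff i| ≤ 2 ^ n :=
  (abs_coeff_prod_one_sub_X_pow_le (Finset.Icc 1 n) id i).trans_eq
    (by rw [Nat.card_Icc, Nat.add_sub_cancel])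

theorem natDegree_qPochhammer_le (n : ℕ) : (qPochhammer n).natDegree ≤ n * (n + 1) / 2 := by
  have hfactor (k : ℕ) : (1 - X ^ k : ℤ[X]).natDegree ≤ k := by compute_degree
  calc (qPochhammer n).natDegree
      ≤ ∑ k ∈ Finset.Icc 1 n, (1 - X ^ k : ℤ[X]).natDegree := natDegree_prod_le _ _
    _ ≤ ∑ k ∈ Finset.Icc 1 n, k := Finset.sum_le_sum fun k _ ↦ hfactor k
    _ ≤ ∑ k ∈ Finset.range (n + 1), k :=
        Finset.sum_le_sum_of_subset fun k hk ↦ Finset.mem_range_succ_iff.2 (Finset.mem_Icc.1 hk).2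
    _ = n * (n + 1) / 2 := by rw [Finset.sum_range_id, Nat.add_sub_cancel, mul_comm]

theorem abs_eval_qPochhammer {b : ℕ} (hb : 0 < b) (n : ℕ) :
    |(qPochhammer n).eval (b : ℤ)| = (∏ k ∈ Finset.range n, (b ^ (k + 1) - 1) : ℕ) := by
  have hfactor (k : ℕ) : |1 - (b : ℤ) ^ k| = (b ^ k - 1 : ℕ) := by
    have hpow : 1 ≤ b ^ k := Nat.one_le_pow _ _ hb
    rw [abs_sub_comm, Nat.cast_sub hpow, Nat.cast_pow, Nat.cast_one]
    exact abs_of_nonneg (sub_nonneg.2 (by exact_mod_cast hpow))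
  rw [qPochhammer, eval_prod, Finset.abs_prod, Nat.cast_prod, ← Finset.Ico_add_one_right_eq_Icc,
    Finset.prod_Ico_eq_prod_range]
  simp [hfactor, add_comm]

theorem L_eq_of_abs_a_le {n J : ℕ} (hJ : J ≤ n * (n + 1) / 2)
    (hmax : ∀ i ≤ n * (n + 1) / 2, |a n i| ≤ |a n J|) (hfirst : ∀ i < J, |a n i| < |a n J|) :
    L n = J := by
  have hM : M n = (a n J).natAbs :=
    le_antisymm
      (Finset.sup_le fun i hi ↦ by zify; exact hmax i (Finset.mem_range_succ_iff.1 hi))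
      (Finset.le_sup (f := fun i ↦ (a n i).natAbs) (Finset.mem_range_succ_iff.2 hJ))
  refine IsLeast.csInf_eq ⟨hM.symm, fun i (hi : (a n i).natAbs = M n) ↦ ?_⟩
  by_contra! hlt
  exact (hfirst i hlt).ne (by rw [Int.abs_eq_natAbs, hi, hM, Int.abs_eq_natAbs])

theorem L_eq_of_isPeakCertificate {n c J h : ℕ} (hn : 2 ^ n ≤ h) (hh : h < 2 ^ c)
    (hJ : J ≤ n * (n + 1) / 2)
    (cert : IsPeakCertificate (∏ k ∈ Finset.range n, ((2 ^ (c + 1)) ^ (k + 1) - 1)) c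
      (n * (n + 1) / 2 + 1) J h) : L n = J := by
  have hpeak {i : ℕ} (hi : i ≤ n * (n + 1) / 2) :
      |a n i| + (if i < J then 1 else 0) ≤ |a n J| :=
    cert.abs_coeff_add_le_abs_coeff hh (Nat.lt_succ_of_le (natDegree_qPochhammer_le n))
      (fun i ↦ (abs_coeff_qPochhammer_le n i).trans (by exact_mod_cast hn))
      (Nat.lt_succ_of_le hJ)
      (by exact_mod_cast abs_eval_qPochhammer (Nat.two_pow_pos (c + 1)) n)
      (Nat.lt_succ_of_le hi)
  refine L_eq_of_abs_a_le hJ (fun i hi ↦ ?_) fun i hi ↦ ?_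
  · exact (le_add_of_nonneg_right (by split_ifs <;> simp)).trans (hpeak hi)
  · simpa only [if_pos hi, Int.add_one_le_iff] using hpeak (hi.le.trans hJ)

end QPochhammer

theorem isPeakCertificate_391 :
    IsPeakCertificate (∏ k ∈ Finset.range 391, ((2 ^ (392 + 1)) ^ (k + 1) - 1)) 392
      (391 * (391 + 1) / 2 + 1) 38194 (2 ^ 392 - 1 - 37277661854305702471955349763188) := by
  -- Multiplying the 391 factors in 17 blocks of 23 is much faster than one after the other.
  rw [show 391 = 17 * 23 from rfl, prod_range_mul_eq_prod_prod]
  decide +kernel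

/-- `L(391) = 391·392/4 - 124 = 38194`. -/
theorem stmt_15 : L 391 = 391 * 392 / 4 - 124 ∧ L 391 = 38194 := by
  have hL : L 391 = 38194 :=
    L_eq_of_isPeakCertificate (by decide +kernel) (by decide +kernel) (by norm_num)
      isPeakCertificate_391
  exact ⟨by rw [hL], hL⟩
end
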